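/- Let K be a (commutative) field and n a positive integer. If V is a K-linear subspace of M_n(K) all of whose elements are nilpotent matrices and dim_K V = (n choose 2), then there exists an invertible matrix P in M_n(K) such that P V P^{-1} equals the set NT_n(K) of all strictly upper-triangular n×n matrices over K. -/

import Mathlib

open Polynomial in
lemma gz_charpolyRev_one {K : Type*} [Field K] {ι : Type*} [Fintype ι] [DecidableEq ι]
    (M : Matrix ι ι K) (hM : IsNilpotent M) :
    (1 - (X : K[X]) • M.map C).det = 1 := by
  have h := Matrix.isUnit_charpolyRev_of_isNilpotent hM
  obtain ⟨r, hr, h2⟩ := Polynomial.isUnit_iff.1 h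
  have h3 := Matrix.eval_charpolyRev (M := M)
  rw [← h2] at h3
  simp at h3
  subst h3
  simpa [Matrix.charpolyRev] using h2.symm

open Polynomial in
lemma gz_matrix_rank_two {K : Type*} [Field K] {ι : Type*} [Fintype ι] [DecidableEq ι]
    (M : Matrix ι ι K) (P : Matrix ι (Fin 2) K) (Q : Matrix (Fin 2) ι K)
    (hM : IsNilpotent M) (hMA : IsNilpotent (M + P * Q)) :
    ∃ H : Fin 2 → Fin 2 → K[X], (∀ i j k, (H i j).coeff k = (Q * M ^ k * P) i j) ∧
      H 0 0 + H 1 1 = X * (H 0 0 * H 1 1 - H 0 1 * H 1 0) := by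
  obtain ⟨N, hN⟩ := hM
  have hd1 := gz_charpolyRev_one M ⟨N, hN⟩
  have hd2 := gz_charpolyRev_one _ hMA
  set M' : Matrix ι ι K[X] := M.map C with hM'
  set P' : Matrix ι (Fin 2) K[X] := P.map C with hP'
  set Q' : Matrix (Fin 2) ι K[X] := Q.map C with hQ'
  set R : Matrix ι ι K[X] := ∑ k ∈ Finset.range N, ((X : K[X]) • M') ^ k with hR
  have hM'N : M' ^ N = 0 := by
    have : M' ^ N = (M ^ N).map C := by
      rw [hM']; exact (map_pow (C.mapMatrix : Matrix ι ι K →+* _) M N).symm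
    rw [this, hN]; ext; simp
  have hinv : (1 - (X : K[X]) • M') * R = 1 := by
    have := mul_neg_geom_sum ((X : K[X]) • M') N
    rw [hR, this, _root_.smul_pow, hM'N]; simp
  have hdR : R.det = 1 := by
    have := congrArg Matrix.det hinv
    rw [Matrix.det_mul, hd1] at this
    simpa using this
  have hsum : (M + P * Q).map C = M' + P' * Q' := by
    rw [hM', hP', hQ', Matrix.map_add _ (by simp), Matrix.map_mul]
  rw [hsum] at hd2
  have h3 : (1 - Q' * (R * ((X : K[X]) • P'))).det = 1 := by
    rw [← Matrix.det_one_sub_mul_comm]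
    have : R * (1 - (X : K[X]) • (M' + P' * Q')) = 1 - R * ((X : K[X]) • P') * Q' := by
      have hinv' : R * (1 - (X : K[X]) • M') = 1 := mul_eq_one_comm.1 hinv
      calc R * (1 - (X : K[X]) • (M' + P' * Q')) = R * (1 - (X : K[X]) • M') - R * ((X : K[X]) • P') * Q' := by
            rw [smul_add, ← sub_sub, mul_sub, ← Matrix.smul_mul, Matrix.mul_assoc]
        _ = _ := by rw [hinv']
    rw [← this, Matrix.det_mul, hdR, hd2, mul_one]
  refine ⟨fun i j => (Q' * R * P') i j, ?_, ?_⟩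
  · intro i j k
    have h5 : ∀ k, Q' * (((X : K[X]) • M') ^ k) * P' = (X : K[X]) ^ k • (Q * M ^ k * P).map C := by
      intro k
      have : M' ^ k = (M ^ k).map C := by
        rw [hM']; exact (map_pow (C.mapMatrix : Matrix ι ι K →+* _) M k).symm
      rw [_root_.smul_pow, this, Matrix.mul_smul, Matrix.smul_mul, Matrix.map_mul, Matrix.map_mul]
    have h6 : Q' * R * P' = ∑ k ∈ Finset.range N, (X : K[X]) ^ k • (Q * M ^ k * P).map C := by
      rw [hR, Matrix.mul_sum, Matrix.sum_mul]
      exact Finset.sum_congr rfl fun k _ => h5 k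
    simp only [h6, Matrix.sum_apply, Matrix.smul_apply, Matrix.map_apply, smul_eq_mul,
      Polynomial.finsetSum_coeff]
    simp only [Polynomial.coeff_X_pow_mul', Polynomial.coeff_C]
    by_cases hk : k < N
    · rw [Finset.sum_eq_single k]
      · simp
      · intro b _ hb
        split_ifs <;> first | rfl | omega
      · intro h; exact absurd (Finset.mem_range.2 hk) h
    · rw [Finset.sum_eq_zero]
      · have : M ^ k = 0 := pow_eq_zero_of_le (by omega) hN
        rw [this]; simp
      · intro b hb
        have := Finset.mem_range.1 hb
        split_ifs <;> first | rfl | omega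
  · have h4 : Q' * (R * ((X : K[X]) • P')) = (X : K[X]) • (Q' * R * P') := by
      rw [Matrix.mul_smul, Matrix.mul_smul, Matrix.mul_assoc]
    rw [h4, Matrix.det_fin_two] at h3
    simp only [Matrix.sub_apply, Matrix.smul_apply, smul_eq_mul, Matrix.one_apply] at h3
    simp at h3
    have hX : (X : K[X]) ≠ 0 := X_ne_zero
    apply mul_left_cancel₀ hX
    linear_combination -h3

open Polynomial in
lemma gz_rank_two {K E : Type*} [Field K] [AddCommGroup E] [Module K E] [FiniteDimensional K E]
    (M A : Module.End K E) (l f : Module.Dual K E) (v u : E)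
    (hA : ∀ x, A x = l x • v + f x • u)
    (hM : IsNilpotent M) (hMA : IsNilpotent (M + A)) :
    ∃ H : Fin 2 → Fin 2 → K[X], (∀ k, (H 0 0).coeff k = l ((M ^ k) v) ∧ (H 0 1).coeff k = l ((M ^ k) u)
      ∧ (H 1 0).coeff k = f ((M ^ k) v) ∧ (H 1 1).coeff k = f ((M ^ k) u)) ∧
      H 0 0 + H 1 1 = X * (H 0 0 * H 1 1 - H 0 1 * H 1 0) := by
  classical
  let b := Module.finBasis K E
  let Pm : (Fin 2 → K) →ₗ[K] E := (LinearMap.proj 0).smulRight v + (LinearMap.proj 1).smulRight u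
  let Qm : E →ₗ[K] (Fin 2 → K) := LinearMap.pi ![l, f]
  let c := Pi.basisFun K (Fin 2)
  have hPQ : Pm ∘ₗ Qm = A := by
    ext x; simp [Pm, Qm, hA]
  have hpow : ∀ T : Module.End K E, IsNilpotent T → IsNilpotent (LinearMap.toMatrix b b T) := by
    intro T hT
    exact hT.map (LinearMap.toMatrixAlgEquiv b)
  obtain ⟨H, h1, h2⟩ := gz_matrix_rank_two (LinearMap.toMatrix b b M) (LinearMap.toMatrix c b Pm)
    (LinearMap.toMatrix b c Qm) (hpow M hM) (by
      rw [← LinearMap.toMatrix_comp, hPQ, ← map_add]; exact hpow _ hMA)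
  have h3 : ∀ k i j, (H i j).coeff k = Qm ((M ^ k) (Pm (Pi.single j 1))) i := by
    intro k i j
    have : (LinearMap.toMatrix b b M) ^ k = LinearMap.toMatrix b b (M ^ k) := by
      exact (map_pow (LinearMap.toMatrixAlgEquiv b) M k).symm
    rw [h1, this, ← LinearMap.toMatrix_comp, ← LinearMap.toMatrix_comp, LinearMap.toMatrix_apply]
    simp [c]
  refine ⟨H, ?_, h2⟩
  intro k
  refine ⟨?_, ?_, ?_, ?_⟩ <;> rw [h3] <;> simp [Pm, Qm]

/-- the consequences of nilpotency for special rank two perturbations -/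
lemma gz_R2 {K E : Type*} [Field K] [AddCommGroup E] [Module K E] [FiniteDimensional K E]
    (M A : Module.End K E) (l f : Module.Dual K E) (v u : E)
    (hA : ∀ x, A x = l x • v + f x • u)
    (hM : IsNilpotent M) (hMA : IsNilpotent (M + A)) (hlv : l v = 0) (hlu : l u = 0) (hfu : f u = 0) :
    l (M v) + f (M u) = 0 ∧ l (M (M v)) + f (M (M u)) + f v * l (M u) = 0 := by
  obtain ⟨H, h1, h2⟩ := gz_rank_two M A l f v u hA hM hMA
  obtain ⟨a0, b0, c0, d0⟩ := h1 0
  obtain ⟨a1, b1, c1, d1⟩ := h1 1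
  obtain ⟨a2, b2, c2, d2⟩ := h1 2
  simp only [pow_zero, pow_one, pow_two, Module.End.mul_apply, Module.End.one_apply] at *
  have e1 := congrArg (fun p => p.coeff 1) h2
  have x0 : (Polynomial.X : Polynomial K).coeff 0 = 0 := Polynomial.coeff_X_zero
  have e2 := congrArg (fun p => p.coeff 2) h2
  simp only [Polynomial.coeff_add, Polynomial.coeff_X_mul, Polynomial.coeff_sub,
    Polynomial.mul_coeff_zero, Polynomial.mul_coeff_one, a0, b0, c0, d0, a1, b1, c1, d1, a2, d2,
    x0, hlv, hlu, hfu] at e1 e2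
  constructor
  · linear_combination e1
  · linear_combination e2

lemma gz_R1 {K E : Type*} [Field K] [AddCommGroup E] [Module K E] [FiniteDimensional K E]
    (M A : Module.End K E) (f : Module.Dual K E) (u : E)
    (hA : ∀ x, A x = f x • u)
    (hM : IsNilpotent M) (hMA : IsNilpotent (M + A)) (k : ℕ) :
    f ((M ^ k) u) = 0 := by
  obtain ⟨H, h1, h2⟩ := gz_rank_two M A 0 f 0 u (by simpa using hA) hM hMA
  have h00 : H 0 0 = 0 := by ext k; simpa using (h1 k).1
  have h01 : H 0 1 = 0 := by ext k; simpa using (h1 k).2.1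
  rw [h00, h01] at h2
  simp at h2
  rw [← (h1 k).2.2.2, h2]; simp


/-- the rank one operator `x ↦ f x • w`, as a linear function of `f` -/
def gzRk {K E : Type*} [Field K] [AddCommGroup E] [Module K E] (w : E) :
    Module.Dual K E →ₗ[K] Module.End K E where
  toFun f := LinearMap.smulRight f w
  map_add' f g := by ext x; simp [add_smul]
  map_smul' c f := by ext x; simp [mul_smul]

lemma gzRk_apply {K E : Type*} [Field K] [AddCommGroup E] [Module K E] (w : E)
    (f : Module.Dual K E) (x : E) : gzRk w f x = f x • w := rfl

/-- the functionals `f` with `x ↦ f x • w` in `V` -/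
def gzL {K E : Type*} [Field K] [AddCommGroup E] [Module K E]
    (V : Submodule K (Module.End K E)) (w : E) : Submodule K (Module.Dual K E) :=
  V.comap (gzRk w)

lemma mem_gzL {K E : Type*} [Field K] [AddCommGroup E] [Module K E]
    (V : Submodule K (Module.End K E)) (w : E) (f : Module.Dual K E) :
    f ∈ gzL V w ↔ gzRk w f ∈ V := Iff.rfl

/-- the space `V w` -/
def gzO {K E : Type*} [Field K] [AddCommGroup E] [Module K E]
    (V : Submodule K (Module.End K E)) (w : E) : Submodule K E :=
  V.map (LinearMap.applyₗ w)

lemma mem_gzO {K E : Type*} [Field K] [AddCommGroup E] [Module K E]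
    (V : Submodule K (Module.End K E)) (w x : E) :
    x ∈ gzO V w ↔ ∃ M ∈ V, M w = x := by
  simp [gzO]

/-- the stabilizer `V_w` -/
def gzS {K E : Type*} [Field K] [AddCommGroup E] [Module K E]
    (V : Submodule K (Module.End K E)) (w : E) : Submodule K (Module.End K E) :=
  V ⊓ LinearMap.ker (LinearMap.applyₗ w : Module.End K E →ₗ[K] E)

lemma mem_gzS {K E : Type*} [Field K] [AddCommGroup E] [Module K E]
    (V : Submodule K (Module.End K E)) (w : E) (M : Module.End K E) :
    M ∈ gzS V w ↔ M ∈ V ∧ M w = 0 := by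
  simp [gzS]

lemma gz_eigen {K E : Type*} [Field K] [AddCommGroup E] [Module K E]
    (M : Module.End K E) (hM : IsNilpotent M) (w : E) (hw : w ≠ 0) (c : K) (h : M w = c • w) :
    c = 0 := by
  obtain ⟨k, hk⟩ := hM
  have : ∀ k, (M ^ k) w = c ^ k • w := by
    intro k
    induction k with
    | zero => simp
    | succ k ih => rw [pow_succ', Module.End.mul_apply, ih, map_smul, h, smul_smul, pow_succ]
  have h2 := this k
  rw [hk] at h2
  have h3 := (smul_eq_zero.1 h2.symm).resolve_right hw
  exact eq_zero_of_pow_eq_zero h3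

lemma gz_finrank_split {K E : Type*} [Field K] [AddCommGroup E] [Module K E] [FiniteDimensional K E]
    (V : Submodule K (Module.End K E)) (w : E) :
    Module.finrank K V = Module.finrank K (gzO V w) + Module.finrank K (gzS V w) := by
  have h := LinearMap.finrank_range_add_finrank_ker
    ((LinearMap.applyₗ w : Module.End K E →ₗ[K] E).domRestrict V)
  rw [← h, LinearMap.range_domRestrict, LinearMap.ker_domRestrict]
  congr 1
  rw [gzS, ← Submodule.map_comap_subtype, Submodule.finrank_map_subtype_eq]

lemma gz_disj {K E : Type*} [Field K] [AddCommGroup E] [Module K E] [FiniteDimensional K E]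
    (V : Submodule K (Module.End K E)) (hV : ∀ M ∈ V, IsNilpotent M) (w : E) (hw : w ≠ 0) :
    Module.finrank K (K ∙ w ⊔ gzO V w : Submodule K E) = Module.finrank K (gzO V w) + 1 := by
  have h := Submodule.finrank_sup_add_finrank_inf_eq (K ∙ w) (gzO V w)
  have h2 : (K ∙ w) ⊓ gzO V w = ⊥ := by
    rw [eq_bot_iff]
    rintro x ⟨h1, h2⟩
    obtain ⟨c, rfl⟩ := Submodule.mem_span_singleton.1 h1
    obtain ⟨M, hM, h3⟩ := (mem_gzO _ _ _).1 h2
    have := gz_eigen M (hV M hM) w hw c h3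
    simp [this]
  rw [h2, finrank_span_singleton hw] at h
  simp at h
  omega

lemma gz_L_le {K E : Type*} [Field K] [AddCommGroup E] [Module K E] [FiniteDimensional K E]
    (V : Submodule K (Module.End K E)) (hV : ∀ M ∈ V, IsNilpotent M) (w : E) :
    gzL V w ≤ (K ∙ w ⊔ gzO V w : Submodule K E).dualAnnihilator := by
  intro f hf
  rw [mem_gzL] at hf
  have h1 : ∀ M ∈ V, ∀ k, f ((M ^ k) w) = 0 := fun M hM k =>
    gz_R1 M (gzRk w f) f w (fun x => rfl) (hV M hM) (hV _ (V.add_mem hM hf)) k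
  rw [Submodule.dualAnnihilator_sup_eq]
  constructor
  · simp only [SetLike.mem_coe, Submodule.mem_dualAnnihilator]
    intro x hx
    obtain ⟨c, rfl⟩ := Submodule.mem_span_singleton.1 hx
    have := h1 0 V.zero_mem 0
    simp at this
    simp [this]
  · simp only [SetLike.mem_coe, Submodule.mem_dualAnnihilator]
    intro x hx
    obtain ⟨M, hM, rfl⟩ := (mem_gzO _ _ _).1 hx
    simpa using h1 M hM 1

lemma gz_L_bound {K E : Type*} [Field K] [AddCommGroup E] [Module K E] [FiniteDimensional K E]
    (V : Submodule K (Module.End K E)) (hV : ∀ M ∈ V, IsNilpotent M) (w : E) (hw : w ≠ 0) :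
    Module.finrank K (gzL V w) + Module.finrank K (gzO V w) + 1 ≤ Module.finrank K E := by
  have h1 := Submodule.finrank_mono (gz_L_le V hV w)
  have h2 := Subspace.finrank_add_finrank_dualAnnihilator_eq (K ∙ w ⊔ gzO V w : Submodule K E)
  have h3 := gz_disj V hV w hw
  omega

lemma gz_L_eq {K E : Type*} [Field K] [AddCommGroup E] [Module K E] [FiniteDimensional K E]
    (V : Submodule K (Module.End K E)) (hV : ∀ M ∈ V, IsNilpotent M) (w : E) (hw : w ≠ 0)
    (h : Module.finrank K (gzL V w) + Module.finrank K (gzO V w) + 1 = Module.finrank K E)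
    (f : Module.Dual K E) (hf : f w = 0) (hf2 : ∀ M ∈ V, f (M w) = 0) : gzRk w f ∈ V := by
  have h2 := Subspace.finrank_add_finrank_dualAnnihilator_eq (K ∙ w ⊔ gzO V w : Submodule K E)
  have h3 := gz_disj V hV w hw
  have h4 := Submodule.eq_of_le_of_finrank_eq (gz_L_le V hV w) (by omega)
  rw [← mem_gzL, h4, Submodule.dualAnnihilator_sup_eq]
  constructor
  · simp only [SetLike.mem_coe, Submodule.mem_dualAnnihilator]
    intro x hx
    obtain ⟨c, rfl⟩ := Submodule.mem_span_singleton.1 hx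
    simp [hf]
  · simp only [SetLike.mem_coe, Submodule.mem_dualAnnihilator]
    intro x hx
    obtain ⟨M, hM, rfl⟩ := (mem_gzO _ _ _).1 hx
    exact hf2 M hM

lemma gz_span_le {K E : Type*} [Field K] [AddCommGroup E] [Module K E]
    (u : E) (M : Module.End K E) (h : M u = 0) : (K ∙ u) ≤ (K ∙ u).comap M := by
  intro x hx
  obtain ⟨c, rfl⟩ := Submodule.mem_span_singleton.1 hx
  simp [h]

/-- the map from the stabilizer of `u` to the endomorphisms of the quotient by `u` -/
def gzPhi {K E : Type*} [Field K] [AddCommGroup E] [Module K E]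
    (V : Submodule K (Module.End K E)) (u : E) :
    gzS V u →ₗ[K] Module.End K (E ⧸ (K ∙ u)) where
  toFun N := (K ∙ u).mapQ (K ∙ u) N.1 (gz_span_le u N.1 ((mem_gzS _ _ _).1 N.2).2)
  map_add' f g := by
    apply Submodule.linearMap_qext; ext x; simp
  map_smul' c f := by
    apply Submodule.linearMap_qext; ext x; simp

/-- the space induced by the stabilizer of `u` on the quotient -/
def gzQ {K E : Type*} [Field K] [AddCommGroup E] [Module K E]
    (V : Submodule K (Module.End K E)) (u : E) : Submodule K (Module.End K (E ⧸ (K ∙ u))) :=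
  LinearMap.range (gzPhi V u)

lemma mem_gzQ {K E : Type*} [Field K] [AddCommGroup E] [Module K E]
    (V : Submodule K (Module.End K E)) (u : E) (T : Module.End K (E ⧸ (K ∙ u))) :
    T ∈ gzQ V u ↔ ∃ N ∈ V, N u = 0 ∧ ∀ x, T ((K ∙ u).mkQ x) = (K ∙ u).mkQ (N x) := by
  constructor
  · rintro ⟨N, rfl⟩
    exact ⟨N.1, ((mem_gzS _ _ _).1 N.2).1, ((mem_gzS _ _ _).1 N.2).2, fun x => rfl⟩
  · rintro ⟨N, hN, hu, h⟩
    refine ⟨⟨N, (mem_gzS _ _ _).2 ⟨hN, hu⟩⟩, ?_⟩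
    apply Submodule.linearMap_qext
    ext x
    exact (h x).symm

lemma gzQ_nil {K E : Type*} [Field K] [AddCommGroup E] [Module K E]
    (V : Submodule K (Module.End K E)) (hV : ∀ M ∈ V, IsNilpotent M) (u : E) :
    ∀ T ∈ gzQ V u, IsNilpotent T := by
  intro T hT
  obtain ⟨N, hN, hu, h⟩ := (mem_gzQ _ _ _).1 hT
  obtain ⟨k, hk⟩ := hV N hN
  refine ⟨k, ?_⟩
  have : ∀ k x, (T ^ k) ((K ∙ u).mkQ x) = (K ∙ u).mkQ ((N ^ k) x) := by
    intro k
    induction k with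
    | zero => intro x; rfl
    | succ k ih => intro x; rw [pow_succ, pow_succ, Module.End.mul_apply, h, ih]; rfl
  apply Submodule.linearMap_qext
  ext x
  have h2 := this k x
  rw [hk] at h2
  simpa using h2

lemma gz_finrank_Q {K E : Type*} [Field K] [AddCommGroup E] [Module K E] [FiniteDimensional K E]
    (V : Submodule K (Module.End K E)) (u : E) :
    Module.finrank K (gzS V u) ≤ Module.finrank K (gzQ V u) + Module.finrank K (gzL V u) := by
  have h := LinearMap.finrank_range_add_finrank_ker (gzPhi V u)
  have h2 : (LinearMap.ker (gzPhi V u)).map (gzS V u).subtype ≤ (gzL V u).map (gzRk u) := by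
    rintro _ ⟨N, hN, rfl⟩
    obtain ⟨N, hN'⟩ := N
    obtain ⟨hN1, hN2⟩ := (mem_gzS _ _ _).1 hN'
    have h3 : ∀ x, N x ∈ K ∙ u := by
      intro x
      have h4 : gzPhi V u ⟨N, hN'⟩ = 0 := hN
      have h5 : gzPhi V u ⟨N, hN'⟩ ((K ∙ u).mkQ x) = (K ∙ u).mkQ (N x) := rfl
      rw [h4] at h5
      simpa using h5.symm
    by_cases hu : u = 0
    · refine ⟨0, Submodule.zero_mem _, ?_⟩
      ext x
      have := h3 x
      simp [hu] at this
      simp [this]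
    · obtain ⟨g, hg⟩ : ∃ g : Module.Dual K E, g u ≠ 0 := by
        by_contra! hcon
        exact hu ((Module.forall_dual_apply_eq_zero_iff K u).1 hcon)
      have h6 : gzRk u ((g u)⁻¹ • (g ∘ₗ N)) = N := by
        ext x
        obtain ⟨c, hc⟩ := Submodule.mem_span_singleton.1 (h3 x)
        rw [gzRk_apply, ← hc]
        simp only [LinearMap.smul_apply, LinearMap.comp_apply, ← hc, map_smul, smul_eq_mul]
        congr 1
        field_simp
      refine ⟨_, ?_, h6⟩
      rw [SetLike.mem_coe, mem_gzL, h6]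
      exact hN1
  have h3 := Submodule.finrank_mono h2
  rw [Submodule.finrank_map_subtype_eq] at h3
  have h4 := Submodule.finrank_map_le (gzRk u) (gzL V u)
  have h5 : Module.finrank K (gzQ V u) = Module.finrank K (LinearMap.range (gzPhi V u)) := rfl
  omega


/-- the configuration that is shown to be contradictory -/
structure GzSetup {K E : Type*} [Field K] [AddCommGroup E] [Module K E] [FiniteDimensional K E]
    (V : Submodule K (Module.End K E)) (m d : ℕ) (b : Module.Basis (Fin (m + 1)) K E)
    (S : Fin (m + 1) → Fin (m + 1) → Module.End K E)
    (ψ : Fin (m + 1) → Fin (m + 1) → Module.Dual K E)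
    (Y : Fin (m + 1) → Module.End K E) : Prop where
  nil : ∀ M ∈ V, IsNilpotent M
  S_mem : ∀ i j, 0 < i → i < j → S i j ∈ V
  S_apply : ∀ i j, 0 < i → i < j → ∀ x, S i j x = b.coord j x • b i + ψ i j x • b 0
  psi0 : ∀ i j, 0 < i → i < j → ψ i j (b 0) = 0
  psid : ∀ i j, 0 < i → i < j → ∀ k : Fin (m + 1), d < k.val → ψ i j (b k) = 0
  L : ∀ k : Fin (m + 1), d < k.val → gzRk (b 0) (b.coord k) ∈ V
  Y_mem : ∀ k : Fin (m + 1), 0 < k → k.val ≤ d → Y k ∈ V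
  Y_apply : ∀ k : Fin (m + 1), 0 < k → k.val ≤ d → ∃ α : K, Y k (b 0) = α • b 0 + b k
  dm : d ≤ m
  d1 : 1 ≤ d
  min : ∀ w : E, w ≠ 0 → d ≤ Module.finrank K (gzO V w)
  du : Module.finrank K (gzO V (b 0)) = d

lemma gz_coord {K E : Type*} [Field K] [AddCommGroup E] [Module K E] {m : ℕ}
    (b : Module.Basis (Fin (m + 1)) K E) (i j : Fin (m + 1)) :
    b.coord j (b i) = if i = j then 1 else 0 := by
  rw [Module.Basis.coord_apply, Module.Basis.repr_self, Finsupp.single_apply]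

namespace GzSetup

variable {K E : Type*} [Field K] [AddCommGroup E] [Module K E] [FiniteDimensional K E]
    {V : Submodule K (Module.End K E)} {m d : ℕ} {b : Module.Basis (Fin (m + 1)) K E}
    {S : Fin (m + 1) → Fin (m + 1) → Module.End K E}
    {ψ : Fin (m + 1) → Fin (m + 1) → Module.Dual K E}
    {Y : Fin (m + 1) → Module.End K E}

lemma finrank_E (_ : GzSetup V m d b S ψ Y) : Module.finrank K E = m + 1 := by
  rw [Module.finrank_eq_card_basis b]; simp

lemma R12 (h : GzSetup V m d b S ψ Y) {M : Module.End K E} (hM : M ∈ V) {i j : Fin (m + 1)}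
    (hi : 0 < i) (hij : i < j) :
    b.coord j (M (b i)) + ψ i j (M (b 0)) = 0 ∧
    b.coord j (M (M (b i))) + ψ i j (M (M (b 0))) + ψ i j (b i) * b.coord j (M (b 0)) = 0 := by
  apply gz_R2 M (S i j) (b.coord j) (ψ i j) (b i) (b 0) (h.S_apply i j hi hij) (h.nil M hM)
    (h.nil _ (V.add_mem hM (h.S_mem i j hi hij)))
  · rw [gz_coord, if_neg hij.ne]
  · rw [gz_coord, if_neg (hi.trans hij).ne]
  · exact h.psi0 i j hi hij

lemma RL (h : GzSetup V m d b S ψ Y) {M : Module.End K E} (hM : M ∈ V) {k : Fin (m + 1)}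
    (hk : d < k.val) (p : ℕ) : b.coord k ((M ^ p) (b 0)) = 0 :=
  gz_R1 M (gzRk (b 0) (b.coord k)) (b.coord k) (b 0) (fun _ => rfl) (h.nil M hM)
    (h.nil _ (V.add_mem hM (h.L k hk))) p

lemma RL1 (h : GzSetup V m d b S ψ Y) {M : Module.End K E} (hM : M ∈ V) {k : Fin (m + 1)}
    (hk : d < k.val) : b.coord k (M (b 0)) = 0 := by
  simpa using h.RL hM hk 1

lemma RL2 (h : GzSetup V m d b S ψ Y) {M : Module.End K E} (hM : M ∈ V) {k : Fin (m + 1)}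
    (hk : d < k.val) : b.coord k (M (M (b 0))) = 0 := by
  simpa [pow_two] using h.RL hM hk 2

lemma S_zero (h : GzSetup V m d b S ψ Y) {i j : Fin (m + 1)}
    (hi : 0 < i) (hij : i < j) : S i j (b 0) = 0 := by
  rw [h.S_apply i j hi hij, h.psi0 i j hi hij, gz_coord, if_neg (hi.trans hij).ne]; simp

lemma R3 (h : GzSetup V m d b S ψ Y) {M : Module.End K E} (hM : M ∈ V) {i j p q : Fin (m + 1)}
    (hi : 0 < i) (hij : i < j) (hp : 0 < p) (hpq : p < q) :
    (if i = q then b.coord j (M (b p)) else 0) + (if p = j then b.coord q (M (b i)) else 0)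
      + ψ p q (b i) * b.coord j (M (b 0)) + ψ i j (b p) * b.coord q (M (b 0)) = 0 := by
  have hS := h.S_mem p q hp hpq
  have e1 := (h.R12 (V.add_mem hM hS) hi hij).2
  have e2 := (h.R12 hM hi hij).2
  have e3 := (h.R12 hS hi hij).2
  have e0 := h.S_zero hp hpq
  simp only [LinearMap.add_apply, map_add, e0, map_zero, mul_zero, add_zero] at e1 e3
  have f1 : S p q (b i) = (if i = q then (1 : K) else 0) • b p + ψ p q (b i) • b 0 := by
    rw [h.S_apply p q hp hpq, gz_coord]
  have f2 : ∀ x, b.coord j (S p q x) = (if p = j then b.coord q x else 0) := by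
    intro x
    rw [h.S_apply p q hp hpq, map_add, map_smul, map_smul, gz_coord, gz_coord,
      if_neg (hi.trans hij).ne]
    split_ifs <;> simp
  have f3 : ψ i j (S p q (M (b 0))) = b.coord q (M (b 0)) * ψ i j (b p) := by
    rw [h.S_apply p q hp hpq, map_add, map_smul, map_smul, h.psi0 i j hi hij]
    simp
  have f4 : b.coord j (M (S p q (b i))) = (if i = q then b.coord j (M (b p)) else 0)
      + ψ p q (b i) * b.coord j (M (b 0)) := by
    rw [f1]; simp only [map_add, map_smul, smul_eq_mul]; split_ifs <;> simp
  rw [f3, f4, f2 (M (b i))] at e1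
  linear_combination e1 - e2 - e3

/-- the disjoint relation -/
lemma R3a (h : GzSetup V m d b S ψ Y) {M : Module.End K E} (hM : M ∈ V) {i j p q : Fin (m + 1)}
    (hi : 0 < i) (hij : i < j) (hp : 0 < p) (hpq : p < q) (h1 : i ≠ q) (h2 : p ≠ j) :
    ψ p q (b i) * b.coord j (M (b 0)) + ψ i j (b p) * b.coord q (M (b 0)) = 0 := by
  have := h.R3 hM hi hij hp hpq
  rw [if_neg h1, if_neg h2] at this
  linear_combination this

/-- the chain relation -/
lemma R3b (h : GzSetup V m d b S ψ Y) {M : Module.End K E} (hM : M ∈ V) {a i j : Fin (m + 1)}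
    (ha : 0 < a) (hai : a < i) (hij : i < j) :
    ψ a j (M (b 0)) = ψ a i (b i) * b.coord j (M (b 0)) + ψ i j (b a) * b.coord i (M (b 0)) := by
  have := h.R3 hM (ha.trans hai) hij ha hai
  rw [if_pos rfl, if_neg (hai.trans hij).ne] at this
  have h2 := (h.R12 hM ha (hai.trans hij)).1
  linear_combination h2 - this

lemma psiY (h : GzSetup V m d b S ψ Y) {i j k : Fin (m + 1)} (hi : 0 < i) (hij : i < j)
    (hk : 0 < k) (hkd : k.val ≤ d) : ψ i j (Y k (b 0)) = ψ i j (b k) := by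
  obtain ⟨α, hα⟩ := h.Y_apply k hk hkd
  rw [hα, map_add, map_smul, h.psi0 i j hi hij]; simp

lemma coordY (h : GzSetup V m d b S ψ Y) {j k : Fin (m + 1)} (hj : 0 < j)
    (hk : 0 < k) (hkd : k.val ≤ d) : b.coord j (Y k (b 0)) = if k = j then 1 else 0 := by
  obtain ⟨α, hα⟩ := h.Y_apply k hk hkd
  rw [hα, map_add, map_smul, gz_coord, gz_coord, if_neg hj.ne]; simp

lemma dw_bound (h : GzSetup V m d b S ψ Y) {w : E} (hw : w ≠ 0) (J : Finset (Fin (m + 1)))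
    (hJ : ∀ j ∈ J, gzRk w (b.coord j) ∈ V) :
    J.card + Module.finrank K (gzO V w) ≤ m := by
  have h1 := gz_L_bound V h.nil w hw
  rw [h.finrank_E] at h1
  have hli : LinearIndependent K (fun j : J => b.coord j.1) := by
    have := b.dualBasis.linearIndependent
    rw [Module.Basis.coe_dualBasis] at this
    exact this.comp _ Subtype.val_injective
  have h2 := finrank_span_eq_card hli
  have h3 : Submodule.span K (Set.range (fun j : J => b.coord j.1)) ≤ gzL V w := by
    rw [Submodule.span_le]
    rintro _ ⟨j, rfl⟩
    exact hJ j.1 j.2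
  have h4 : J.card ≤ Module.finrank K (gzL V w) := by
    have h5 := Submodule.finrank_mono h3
    have h6 : Fintype.card J = J.card := Fintype.card_coe J
    rw [← h6, ← h2]
    exact h5
  omega

lemma w_ne (b : Module.Basis (Fin (m + 1)) K E) (i : Fin (m + 1)) (hi : 0 < i) (c : K) :
    b i + c • b 0 ≠ 0 := by
  intro h0
  have := congrArg (b.coord i) h0
  rw [map_add, map_smul, gz_coord, gz_coord, if_neg hi.ne] at this
  simp at this

lemma wL (h : GzSetup V m d b S ψ Y) {i j : Fin (m + 1)} (hi : 0 < i) (hij : i < j) (c : K)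
    (hc : ∀ k : Fin (m + 1), 0 < k → k.val ≤ d → ψ i j (b k) = if k = j then c else 0) :
    gzRk (b i + c • b 0) (b.coord j) ∈ V := by
  by_cases hjd : j.val ≤ d
  · have h1 : ψ i j = c • b.coord j := by
      apply b.ext
      intro k
      rw [LinearMap.smul_apply, gz_coord]
      rcases Nat.lt_or_ge d k.val with hk | hk
      · rw [h.psid i j hi hij k hk, if_neg (by rintro rfl; omega)]; simp
      · rcases (Fin.zero_le k).eq_or_lt with hk0 | hk0
        · rw [← hk0, h.psi0 i j hi hij, if_neg (hi.trans hij).ne]; simp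
        · rw [hc k hk0 hk]; split_ifs <;> simp
    have h2 : gzRk (b i + c • b 0) (b.coord j) = S i j := by
      ext x
      rw [h.S_apply i j hi hij, gzRk_apply, h1, LinearMap.smul_apply, smul_add, smul_smul,
        smul_eq_mul, mul_comm c]
    rw [h2]; exact h.S_mem i j hi hij
  · have h1 : ψ i j = 0 := by
      apply b.ext
      intro k
      rcases Nat.lt_or_ge d k.val with hk | hk
      · rw [h.psid i j hi hij k hk]; simp
      · rcases (Fin.zero_le k).eq_or_lt with hk0 | hk0
        · rw [← hk0, h.psi0 i j hi hij]; simp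
        · rw [hc k hk0 hk, if_neg (by rintro rfl; omega)]; simp
    have h2 : gzRk (b i + c • b 0) (b.coord j) = S i j + c • gzRk (b 0) (b.coord j) := by
      ext x
      rw [LinearMap.add_apply, LinearMap.smul_apply, h.S_apply i j hi hij, gzRk_apply, gzRk_apply, h1]
      simp [smul_smul, mul_comm]
    rw [h2]
    exact V.add_mem (h.S_mem i j hi hij) (V.smul_mem _ (h.L j (by omega)))

/-- existence of an operator killing `w` but not `b 0` -/
lemma exY (h : GzSetup V m d b S ψ Y) {w : E} (hd : Module.finrank K (gzO V w) ≤ d)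
    {T : Module.End K E} (hT : T ∈ V) (hT0 : T (b 0) = 0) (hTw : T w ≠ 0) :
    ∃ Z ∈ V, Z w = 0 ∧ Z (b 0) ≠ 0 := by
  by_contra! hcon
  have h1 := gz_finrank_split V w
  have h2 := gz_finrank_split V (b 0)
  rw [h.du] at h2
  have h3 : gzS V w ≤ gzS V (b 0) := by
    intro Z hZ
    obtain ⟨hZ1, hZ2⟩ := (mem_gzS _ _ _).1 hZ
    exact (mem_gzS _ _ _).2 ⟨hZ1, hcon Z hZ1 hZ2⟩
  have h4 := Submodule.eq_of_le_of_finrank_le h3 (by omega)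
  have h5 : T ∈ gzS V w := by rw [h4]; exact (mem_gzS _ _ _).2 ⟨hT, hT0⟩
  exact hTw ((mem_gzS _ _ _).1 h5).2

lemma lemZ (h : GzSetup V m d b S ψ Y) {w : E} {T Z : Module.End K E} (hT : T ∈ V) (hZ : Z ∈ V)
    (hT0 : T (b 0) = 0) (t : K) (ht : t ≠ 0) (hTw : T w = t • b 0) (hZw : Z w = 0)
    (α β : K) (hZ0 : Z (b 0) = α • b 0 + β • w) (hne : Z (b 0) ≠ 0) : False := by
  have h1 : Z (Z (b 0)) = α • Z (b 0) := by
    conv_lhs => rw [hZ0]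
    rw [map_add, map_smul, map_smul, hZw]; simp
  have h2 := gz_eigen Z (h.nil Z hZ) _ hne α h1
  rw [h2] at hZ0
  simp at hZ0
  have hβ : β ≠ 0 := by
    rintro rfl; simp at hZ0; exact hne hZ0
  have h3 : ((Z + T) ^ 2) (b 0) = (β * t) • b 0 := by
    simp [pow_two, hZ0, hT0, hTw, hZw, smul_smul]
  have h4 := gz_eigen _ ((h.nil _ (V.add_mem hZ hT)).pow_of_pos (n := 2) (by norm_num)) _
    (b.ne_zero 0) _ h3
  simp [hβ, ht] at h4

end GzSetup


namespace GzSetup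

variable {K E : Type*} [Field K] [AddCommGroup E] [Module K E] [FiniteDimensional K E]
    {V : Submodule K (Module.End K E)} {m d : ℕ} {b : Module.Basis (Fin (m + 1)) K E}
    {S : Fin (m + 1) → Fin (m + 1) → Module.End K E}
    {ψ : Fin (m + 1) → Fin (m + 1) → Module.Dual K E}
    {Y : Fin (m + 1) → Module.End K E}

lemma fpos {i : Fin (m + 1)} (h : 0 < i.val) : 0 < i := by
  rw [Fin.lt_def]; simpa using h

lemma wL' (h : GzSetup V m d b S ψ Y) {i1 i2 j : Fin (m + 1)} (h1 : i1.val = 1) (h2 : i2.val = 2)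
    (hj : 2 < j.val) (hz : ψ i2 j (b i1) = 0) :
    gzRk (b i1 + ψ i1 i2 (b i2) • b 0) (b.coord j) ∈ V := by
  have p1 : 0 < i1 := fpos (by omega)
  have l12 : i1 < i2 := by rw [Fin.lt_def]; omega
  have l2j : i2 < j := by rw [Fin.lt_def]; omega
  apply h.wL p1 (l12.trans l2j)
  intro k hk hkd
  rw [← h.psiY p1 (l12.trans l2j) hk hkd, h.R3b (h.Y_mem k hk hkd) p1 l12 l2j, hz,
    h.coordY (p1.trans (l12.trans l2j)) hk hkd]
  split_ifs <;> simp

lemma card_ge {c : ℕ} (hc : c ≤ m) :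
    (Finset.univ.filter (fun k : Fin (m + 1) => c ≤ k.val)).card = m + 1 - c := by
  have : (Finset.univ.filter (fun k : Fin (m + 1) => c ≤ k.val)) = Finset.Ici ⟨c, by omega⟩ := by
    ext k; simp [Fin.le_def]
  rw [this, Fin.card_Ici]

lemma card_ge' {c : ℕ} :
    m + 1 - c ≤ (Finset.univ.filter (fun k : Fin (m + 1) => c ≤ k.val)).card := by
  by_cases hc : c ≤ m
  · rw [card_ge hc]
  · omega

/-- if `p_{2j}(1) = 0` for all `j ≥ 3` then `d ≤ 2` -/
lemma le_two (h : GzSetup V m d b S ψ Y) {i1 i2 : Fin (m + 1)} (h1 : i1.val = 1) (h2 : i2.val = 2)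
    (hz : ∀ j : Fin (m + 1), 2 < j.val → ψ i2 j (b i1) = 0) : d ≤ 2 := by
  have hw := w_ne b i1 (fpos (by omega)) (ψ i1 i2 (b i2))
  have hb := h.dw_bound hw (Finset.univ.filter (fun k : Fin (m + 1) => 3 ≤ k.val)) (by
    intro j hj
    simp at hj
    exact h.wL' h1 h2 (by omega) (hz j (by omega)))
  have := h.min _ hw
  have := card_ge' (m := m) (c := 3)
  have := i2.2
  omega

lemma case_big (h : GzSetup V m d b S ψ Y) (hd : 4 ≤ d) : False := by
  have hdm := h.dm
  obtain ⟨i1, h1⟩ : ∃ i : Fin (m + 1), i.val = 1 := ⟨⟨1, by omega⟩, rfl⟩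
  obtain ⟨i2, h2⟩ : ∃ i : Fin (m + 1), i.val = 2 := ⟨⟨2, by omega⟩, rfl⟩
  have p1 : 0 < i1 := fpos (by omega)
  have p2 : 0 < i2 := fpos (by omega)
  have := h.le_two h1 h2 (by
    intro j hj
    obtain ⟨q, hq, hqd, hqj⟩ : ∃ q : Fin (m + 1), 2 < q.val ∧ q.val ≤ d ∧ q ≠ j := by
      by_cases hj3 : j.val = 3
      · exact ⟨⟨4, by omega⟩, by simp, by simpa using hd, by intro h; rw [← h] at hj3; simp at hj3⟩
      · exact ⟨⟨3, by omega⟩, by simp, by simp; omega, by intro h; rw [← h] at hj3; simp at hj3⟩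
    have pq : 0 < q := fpos (by omega)
    have e := h.R3a (h.Y_mem q pq hqd) (i := i2) (j := j) (p := i1) (q := q) p2
      (by rw [Fin.lt_def]; omega) p1 (by rw [Fin.lt_def]; omega)
      (by intro h; rw [h] at h2; omega) (by intro h; rw [h] at h1; omega)
    rw [h.coordY (fpos (by omega)) pq hqd, h.coordY pq pq hqd, if_neg hqj, if_pos rfl] at e
    simpa using e)
  omega

lemma expand01 (b : Module.Basis (Fin (m + 1)) K E) {i1 : Fin (m + 1)} (h1 : i1.val = 1) (x : E)
    (hx : ∀ k : Fin (m + 1), 1 < k.val → b.coord k x = 0) :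
    x = b.coord 0 x • b 0 + b.coord i1 x • b i1 := by
  apply b.ext_elem
  intro k
  have : ∀ y, b.repr y k = b.coord k y := fun y => rfl
  rw [this, this, map_add, map_smul, map_smul, gz_coord, gz_coord]
  have p1 : (0 : Fin (m + 1)) ≠ i1 := (fpos (by omega)).ne
  by_cases hk : 1 < k.val
  · rw [hx k hk, if_neg (fpos (by omega)).ne, if_neg (by rintro rfl; omega)]; simp
  · by_cases hk0 : k.val = 0
    · have : k = 0 := Fin.ext (by simpa using hk0)
      subst this
      simp [p1.symm]
    · have : k = i1 := Fin.ext (by omega)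
      subst this
      simp [p1]

/-- common end of the two cases with `p_{23}(1) ≠ 0` -/
lemma finishZ (h : GzSetup V m d b S ψ Y) {i1 i2 i3 : Fin (m + 1)}
    (h1 : i1.val = 1) (h2 : i2.val = 2) (h3 : i3.val = 3) (c : K)
    (ht : ψ i2 i3 (b i1) ≠ 0) (hd : Module.finrank K (gzO V (b i1 + c • b 0)) ≤ d)
    (hZ : ∀ Z ∈ V, Z (b i1 + c • b 0) = 0 → ∀ k : Fin (m + 1), 1 < k.val → b.coord k (Z (b 0)) = 0) :
    False := by
  have p2 : 0 < i2 := fpos (by omega)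
  have l23 : i2 < i3 := by rw [Fin.lt_def]; omega
  have hTw : S i2 i3 (b i1 + c • b 0) = ψ i2 i3 (b i1) • b 0 := by
    rw [map_add, map_smul, h.S_zero p2 l23, h.S_apply i2 i3 p2 l23, gz_coord,
      if_neg (by intro h; rw [h] at h1; omega)]
    simp
  obtain ⟨Z, hZV, hZw, hZ0⟩ := h.exY hd (h.S_mem i2 i3 p2 l23) (h.S_zero p2 l23) (by
    rw [hTw]; exact smul_ne_zero ht (b.ne_zero 0))
  have e := expand01 b h1 (Z (b 0)) (hZ Z hZV hZw)
  refine h.lemZ (h.S_mem i2 i3 p2 l23) hZV (h.S_zero p2 l23) _ ht hTw hZw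
    (b.coord 0 (Z (b 0)) - c * b.coord i1 (Z (b 0))) (b.coord i1 (Z (b 0))) ?_ hZ0
  conv_lhs => rw [e]
  module

lemma case_three (h : GzSetup V m d b S ψ Y) (hd : d = 3) : False := by
  have hdm := h.dm
  subst hd
  obtain ⟨i1, h1⟩ : ∃ i : Fin (m + 1), i.val = 1 := ⟨⟨1, by omega⟩, rfl⟩
  obtain ⟨i2, h2⟩ : ∃ i : Fin (m + 1), i.val = 2 := ⟨⟨2, by omega⟩, rfl⟩
  obtain ⟨i3, h3⟩ : ∃ i : Fin (m + 1), i.val = 3 := ⟨⟨3, by omega⟩, rfl⟩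
  have p1 : 0 < i1 := fpos (by omega)
  have p2 : 0 < i2 := fpos (by omega)
  have p3 : 0 < i3 := fpos (by omega)
  have l12 : i1 < i2 := by rw [Fin.lt_def]; omega
  have l23 : i2 < i3 := by rw [Fin.lt_def]; omega
  have n12 : i1 ≠ i2 := l12.ne
  have n13 : i1 ≠ i3 := (l12.trans l23).ne
  have n23 : i2 ≠ i3 := l23.ne
  have hz4 : ∀ j : Fin (m + 1), 3 < j.val → ψ i2 j (b i1) = 0 := by
    intro j hj
    have hqj : i3 ≠ j := by intro h; rw [h] at h3; omega
    have e := h.R3a (h.Y_mem i3 p3 (by omega)) (i := i2) (j := j) (p := i1) (q := i3) p2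
      (by rw [Fin.lt_def]; omega) p1 (l12.trans l23) n23 (by intro h; rw [h] at h1; omega)
    rw [h.coordY (fpos (by omega)) p3 (by omega), h.coordY p3 p3 (by omega), if_neg hqj, if_pos rfl] at e
    simpa using e
  by_cases ht : ψ i2 i3 (b i1) = 0
  · have := h.le_two h1 h2 (by
      intro j hj
      by_cases hj3 : j.val = 3
      · have : j = i3 := Fin.ext (by omega)
        rw [this]; exact ht
      · exact hz4 j (by omega))
    omega
  · set c := ψ i1 i2 (b i2) with hc
    have hw := w_ne b i1 p1 c
    have hwj : ∀ j : Fin (m + 1), 4 ≤ j.val → gzRk (b i1 + c • b 0) (b.coord j) ∈ V :=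
      fun j hj => h.wL' h1 h2 (by omega) (hz4 j (by omega))
    have h121 : ψ i1 i2 (b i1) = 0 := by
      have e := h.R3a (h.Y_mem i3 p3 (by omega)) (i := i1) (j := i3) (p := i1) (q := i2) p1
        (l12.trans l23) p1 l12 n12 n13
      rw [h.coordY p3 p3 (by omega), h.coordY p2 p3 (by omega), if_neg n23.symm, if_pos rfl] at e
      simpa using e
    have hmin := h.min _ hw
    by_cases hg : ψ i1 i2 (b i3) = 0
    · have hb := h.dw_bound hw (insert i2 (Finset.univ.filter (fun k : Fin (m + 1) => 4 ≤ k.val))) (by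
        intro j hj
        rw [Finset.mem_insert] at hj
        rcases hj with rfl | hj
        · apply h.wL p1 l12
          intro k hk hkd
          have hk' : 0 < k.val := Fin.lt_def.1 hk
          obtain rfl | rfl | rfl : k = i1 ∨ k = j ∨ k = i3 := by
            simp only [Fin.ext_iff]; omega
          · rw [h121, if_neg n12]
          · rw [if_pos rfl]
          · rw [hg, if_neg n23.symm]
        · simp at hj
          exact hwj j hj)
      rw [Finset.card_insert_of_notMem (by simp [h2])] at hb
      have := card_ge' (m := m) (c := 4)
      omega
    · have hb := h.dw_bound hw (Finset.univ.filter (fun k : Fin (m + 1) => 4 ≤ k.val)) (by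
        intro j hj
        simp at hj
        exact hwj j hj)
      have := card_ge' (m := m) (c := 4)
      apply h.finishZ h1 h2 h3 c ht (by omega)
      intro Z hZ hZw
      have hZ1 : Z (b i1) = - c • Z (b 0) := by
        rw [map_add, map_smul] at hZw
        rw [neg_smul]; exact eq_neg_of_add_eq_zero_left hZw
      have e13 := (h.R12 hZ p1 (l12.trans l23)).1
      rw [h.R3b hZ p1 l12 l23, hZ1, map_smul, smul_eq_mul, ← hc] at e13
      have z2 : b.coord i2 (Z (b 0)) = 0 := by
        have : ψ i2 i3 (b i1) * b.coord i2 (Z (b 0)) = 0 := by linear_combination e13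
        exact (mul_eq_zero.1 this).resolve_left ht
      have e12 := (h.R12 hZ p1 l12).1
      have hψ : ψ i1 i2 = c • b.coord i2 + ψ i1 i2 (b i3) • b.coord i3 := by
        apply b.ext
        intro k
        rw [LinearMap.add_apply, LinearMap.smul_apply, LinearMap.smul_apply, gz_coord, gz_coord]
        rcases Nat.lt_or_ge 3 k.val with hk | hk
        · rw [h.psid i1 i2 p1 l12 k hk, if_neg (by rintro rfl; omega), if_neg (by rintro rfl; omega)]
          simp
        · obtain rfl | rfl | rfl | rfl : k = 0 ∨ k = i1 ∨ k = i2 ∨ k = i3 := by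
            simp only [Fin.ext_iff, Fin.val_zero]; omega
          · rw [h.psi0 i1 i2 p1 l12, if_neg p2.ne, if_neg p3.ne]; simp
          · rw [h121, if_neg n12, if_neg n13]; simp
          · rw [if_pos rfl, if_neg n23, ← hc]; simp
          · rw [if_pos rfl, if_neg n23.symm]; simp
      have e12' : ψ i1 i2 (Z (b 0)) = c * b.coord i2 (Z (b 0)) + ψ i1 i2 (b i3) * b.coord i3 (Z (b 0)) := by
        conv_lhs => rw [hψ]
        rfl
      rw [e12', hZ1, map_smul, z2] at e12
      have z3 : b.coord i3 (Z (b 0)) = 0 := by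
        simpa [hg] using e12
      intro k hk
      rcases Nat.lt_or_ge 3 k.val with hk3 | hk3
      · exact h.RL1 hZ hk3
      · obtain rfl | rfl : k = i2 ∨ k = i3 := by
          simp only [Fin.ext_iff]; omega
        · exact z2
        · exact z3

end GzSetup


lemma gz_quad {K E : Type*} [Field K] [AddCommGroup E] [Module K E]
    (T : Module.End K E) (hT : IsNilpotent T) (x : E) (hx : x ≠ 0) (hTx : T x ≠ 0) (p q : K)
    (h : T (T x) = p • x + q • T x) : T (T x) = 0 := by
  have hp : p = 0 := by
    have hc : Commute T (T - q • (1 : Module.End K E)) := by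
      apply Commute.sub_right (Commute.refl _)
      exact (Commute.one_right T).smul_right q
    have h1 := hc.isNilpotent_mul_right hT
    apply gz_eigen _ h1 x hx
    simp [h]
  rw [hp] at h
  simp at h
  have := gz_eigen T hT _ hTx q h
  rw [h, this]; simp

lemma gz_nil3 {K E : Type*} [Field K] [AddCommGroup E] [Module K E]
    (e : Fin 3 → E) (he : LinearIndependent K e) (T : Module.End K E) (hT : IsNilpotent T)
    (B : Matrix (Fin 3) (Fin 3) K) (hB : ∀ j, T (e j) = ∑ i, B i j • e i) : IsNilpotent B := by
  obtain ⟨k, hk⟩ := hT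
  refine ⟨k, ?_⟩
  have hinj := LinearIndependent.fintypeLinearCombination_injective he
  have h1 : ∀ v, T (Fintype.linearCombination K e v) = Fintype.linearCombination K e (B.mulVec v) := by
    intro v
    simp only [Fintype.linearCombination_apply, map_sum, map_smul, hB, Matrix.mulVec, dotProduct,
      Finset.smul_sum, Finset.sum_smul]
    rw [Finset.sum_comm]
    refine Finset.sum_congr rfl fun i _ => Finset.sum_congr rfl fun j _ => ?_
    rw [smul_smul, mul_comm]
  have h2 : ∀ k v, (T ^ k) (Fintype.linearCombination K e v)
      = Fintype.linearCombination K e ((B ^ k).mulVec v) := by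
    intro k
    induction k with
    | zero => intro v; simp
    | succ k ih =>
      intro v
      rw [pow_succ, Module.End.mul_apply, h1, ih, Matrix.mulVec_mulVec, ← pow_succ]
  apply Matrix.ext_of_mulVec_single
  intro i
  apply hinj
  rw [← h2, hk, Matrix.zero_mulVec, map_zero]; rfl

lemma gz_coef3 {K : Type*} [Field K] (a b c p q r x y z : K)
    (h : IsNilpotent !![a, b, c; p, q, r; x, y, z]) :
    a + q + z = 0 ∧ a * q - b * p + (a * z - c * x) + (q * z - r * y) = 0 ∧
    a * (q * z - r * y) - b * (p * z - r * x) + c * (p * y - q * x) = 0 := by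
  have h1 := Matrix.isNilpotent_charpoly_sub_pow_of_isNilpotent h
  have h2 := sub_eq_zero.1 h1.eq_zero
  have h3 : (!![a, b, c; p, q, r; x, y, z]).charpoly = Polynomial.X ^ 3
      - Polynomial.C (a + q + z) * Polynomial.X ^ 2
      + Polynomial.C (a * q - b * p + (a * z - c * x) + (q * z - r * y)) * Polynomial.X
      - Polynomial.C (a * (q * z - r * y) - b * (p * z - r * x) + c * (p * y - q * x)) := by
    rw [Matrix.charpoly, Matrix.det_fin_three]
    simp [Matrix.charmatrix_apply]
    ring
  rw [h3] at h2
  generalize a + q + z = t at *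
  generalize a * q - b * p + (a * z - c * x) + (q * z - r * y) = t2 at *
  generalize a * (q * z - r * y) - b * (p * z - r * x) + c * (p * y - q * x) = t3 at *
  have k2 := congrArg (fun f => Polynomial.coeff f 2) h2
  have k1 := congrArg (fun f => Polynomial.coeff f 1) h2
  have k0 := congrArg (fun f => Polynomial.coeff f 0) h2
  simp [Polynomial.coeff_X, Polynomial.coeff_C, Polynomial.coeff_X_pow] at k2 k1 k0
  exact ⟨k2, k1, k0⟩

lemma gz_three {K : Type*} [Field K] (hK : ∀ l : K, l * l = l) (e g r x0 x1 x2 e' g' r' z0 z1 z2 : K)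
    (h1 : IsNilpotent !![e, 0, x0; 1, g, x1; 0, r, x2])
    (h2 : IsNilpotent !![e, 1, x0; 1, g, x1 + 1; 0, r, x2])
    (h3 : IsNilpotent !![e', 0, z0; 0, g', z1; 1, r', z2])
    (h4 : IsNilpotent !![e', 1, z0; 0, g', z1 + 1; 1, r', z2])
    (h5 : IsNilpotent !![e + e', 0, x0 + z0; 1, g + g', x1 + z1; 1, r + r', x2 + z2])
    (h6 : IsNilpotent !![e + e', 1, x0 + z0; 1, g + g', x1 + z1 + 1; 1, r + r', x2 + z2]) :
    False := by
  have two : (1 : K) + 1 = 0 := by linear_combination hK (-1)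
  obtain ⟨a1, a2, a3⟩ := gz_coef3 _ _ _ _ _ _ _ _ _ h1
  obtain ⟨b1, b2, b3⟩ := gz_coef3 _ _ _ _ _ _ _ _ _ h2
  obtain ⟨c1, c2, c3⟩ := gz_coef3 _ _ _ _ _ _ _ _ _ h3
  obtain ⟨d1, d2, d3⟩ := gz_coef3 _ _ _ _ _ _ _ _ _ h4
  obtain ⟨k1, k2, k3⟩ := gz_coef3 _ _ _ _ _ _ _ _ _ h5
  obtain ⟨l1, l2, l3⟩ := gz_coef3 _ _ _ _ _ _ _ _ _ h6
  have hr : r = 1 := by linear_combination a2 - b2 - two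
  subst hr
  have hx2 : x2 = e := by linear_combination a3 - b3 - e * two
  subst hx2
  have hg : g = 0 := by linear_combination a1 - x2 * two
  subst hg
  have hx1 : x1 = x2 := by linear_combination -a2 + hK x2
  subst hx1
  have hx0 : x0 = x1 := by linear_combination a3 + hK x1
  subst hx0
  have hr' : r' = 0 := by linear_combination c2 - d2
  subst hr'
  have hz1 : z1 = 1 := by linear_combination d3 - c3 - two
  subst hz1
  have hz2 : z2 = e' + g' := by linear_combination c1 - (e' + g') * two
  subst hz2
  have hz0 : z0 = e' + g' + e' * g' := by
    linear_combination -c2 + hK e' + hK g' + (e' * g') * two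
  subst hz0
  have hg' : g' = 0 := by
    linear_combination -c3 + g' * hK e' - hK g'
  subst hg'
  have he : x0 = 1 := by
    linear_combination -k2 + hK (x0 + e') - two
  subst he
  have he' : e' = 1 := by
    linear_combination -k3 - two
  subst he'
  have : (1 : K) = 0 := by linear_combination l3 + 2 * two
  exact one_ne_zero this


namespace GzSetup

variable {K E : Type*} [Field K] [AddCommGroup E] [Module K E] [FiniteDimensional K E]
    {V : Submodule K (Module.End K E)} {m d : ℕ} {b : Module.Basis (Fin (m + 1)) K E}
    {S : Fin (m + 1) → Fin (m + 1) → Module.End K E}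
    {ψ : Fin (m + 1) → Fin (m + 1) → Module.Dual K E}
    {Y : Fin (m + 1) → Module.End K E}

lemma case_one (h : GzSetup V m d b S ψ Y) (hd : d = 1) : False := by
  have hdm := h.dm
  subst hd
  obtain ⟨i1, h1⟩ : ∃ i : Fin (m + 1), i.val = 1 := ⟨⟨1, by omega⟩, rfl⟩
  have p1 : 0 < i1 := fpos (by omega)
  obtain ⟨α, hα⟩ := h.Y_apply i1 p1 (by omega)
  have hM := h.Y_mem i1 p1 (by omega)
  set w := Y i1 (b 0) with hw
  have hw0 : w ≠ 0 := by
    rw [hα, add_comm]; exact w_ne b i1 p1 α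
  have key : ∀ T ∈ V, T (b 0) = w → T w = 0 := by
    intro T hT hTw
    have e := expand01 b h1 (T w) (by
      intro k hk
      rw [← hTw]
      exact h.RL2 hT hk)
    rw [← hTw]
    apply gz_quad T (h.nil T hT) (b 0) (b.ne_zero 0) (by rw [hTw]; exact hw0)
      (b.coord 0 (T w) - α * b.coord i1 (T w)) (b.coord i1 (T w))
    rw [hTw]
    conv_lhs => rw [e]
    have : b i1 = w - α • b 0 := by rw [hα]; module
    rw [this]; module
  have hall : ∀ N ∈ V, N w = 0 := by
    intro N hN
    set l := b.coord i1 (N (b 0)) with hl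
    have hN' : N - l • Y i1 ∈ V := V.sub_mem hN (V.smul_mem _ hM)
    have e := expand01 b h1 (N (b 0)) (fun k hk => h.RL1 hN hk)
    have e2 : (N - l • Y i1) (b 0) = (b.coord 0 (N (b 0)) - l * α) • b 0 := by
      rw [LinearMap.sub_apply, LinearMap.smul_apply, ← hw, hα]
      conv_lhs => rw [e]
      rw [← hl]; module
    have e3 := gz_eigen _ (h.nil _ hN') _ (b.ne_zero 0) _ e2
    rw [e3, zero_smul] at e2
    have e4 := key _ (V.add_mem hM hN') (by rw [LinearMap.add_apply, e2, add_zero])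
    have e5 := key _ hM rfl
    simpa [e5] using e4
  have h2 := h.min w hw0
  have h3 : gzO V w = ⊥ := by
    rw [eq_bot_iff]
    intro x hx
    obtain ⟨M, hM, rfl⟩ := (mem_gzO _ _ _).1 hx
    simp [hall M hM]
  rw [h3] at h2
  simp at h2

lemma expand012 (b : Module.Basis (Fin (m + 1)) K E) {i1 i2 : Fin (m + 1)} (h1 : i1.val = 1)
    (h2 : i2.val = 2) (x : E)
    (hx : ∀ k : Fin (m + 1), 2 < k.val → b.coord k x = 0) :
    x = b.coord 0 x • b 0 + b.coord i1 x • b i1 + b.coord i2 x • b i2 := by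
  apply b.ext_elem
  intro k
  have : ∀ y, b.repr y k = b.coord k y := fun y => rfl
  rw [this, this, map_add, map_add, map_smul, map_smul, map_smul, gz_coord, gz_coord, gz_coord]
  have p1 : (0 : Fin (m + 1)) ≠ i1 := (fpos (by omega)).ne
  have p2 : (0 : Fin (m + 1)) ≠ i2 := (fpos (by omega)).ne
  have p3 : i1 ≠ i2 := by intro h; rw [h] at h1; omega
  by_cases hk : 2 < k.val
  · rw [hx k hk, if_neg (fpos (by omega)).ne, if_neg (by rintro rfl; omega),
      if_neg (by rintro rfl; omega)]; simp
  · obtain rfl | rfl | rfl : k = 0 ∨ k = i1 ∨ k = i2 := by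
      simp only [Fin.ext_iff, Fin.val_zero]; omega
    · simp [p1.symm, p2.symm]
    · simp [p1, p3.symm]
    · simp [p2, p3]

lemma case_two_sub (h : GzSetup V m 2 b S ψ Y) {i1 i2 : Fin (m + 1)} (h1 : i1.val = 1)
    (h2 : i2.val = 2) (hz : ∀ j : Fin (m + 1), 2 < j.val → ψ i2 j (b i1) = 0)
    (hs : ψ i1 i2 (b i1) ≠ 0) : False := by
  have p1 : 0 < i1 := fpos (by omega)
  have p2 : 0 < i2 := fpos (by omega)
  have l12 : i1 < i2 := by rw [Fin.lt_def]; omega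
  set c := ψ i1 i2 (b i2) with hc
  set s := ψ i1 i2 (b i1) with hsd
  have hM1 := h.Y_mem i1 p1 (by omega)
  have hM2 := h.Y_mem i2 p2 (by omega)
  have hN := h.S_mem i1 i2 p1 l12
  have hK : ∀ l : K, l * l = l := by
    intro l
    have e1 := (h.R12 hM2 p1 l12).2
    have e2 := (h.R12 (V.smul_mem l hM2) p1 l12).2
    simp only [LinearMap.smul_apply, map_smul, smul_eq_mul, h.coordY p2 p2 (show i2.val ≤ 2 by omega),
      if_true, ← hsd] at e1 e2
    have : (l * l - l) * s = 0 := by linear_combination l * l * e1 - e2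
    exact sub_eq_zero.1 ((mul_eq_zero.1 this).resolve_right hs)
  have s1 : s = 1 := by
    have := hK s
    exact mul_left_cancel₀ hs (by rw [this, mul_one])
  set w := b i1 + c • b 0 with hw
  -- invariance of the span
  have inv0 : ∀ T ∈ V, ∀ k : Fin (m + 1), 2 < k.val → b.coord k (T (b 0)) = 0 :=
    fun T hT k hk => h.RL1 hT hk
  have inv1 : ∀ T ∈ V, ∀ k : Fin (m + 1), 2 < k.val → b.coord k (T (b i1)) = 0 := by
    intro T hT k hk
    have l2k : i2 < k := by rw [Fin.lt_def]; omega
    have e1 := (h.R12 hT p1 (l12.trans l2k)).1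
    rw [h.R3b hT p1 l12 l2k, hz k hk, inv0 T hT k hk] at e1
    simpa using e1
  have inv2 : ∀ T ∈ V, ∀ k : Fin (m + 1), 2 < k.val → b.coord k (T (b i2)) = 0 := by
    intro T hT k hk
    have l2k : i2 < k := by rw [Fin.lt_def]; omega
    have q : ψ i2 k (b i2) = 0 := by
      have e1 := (h.R12 hM2 p2 l2k).1
      have e2 := h.RL2 hM2 hk
      obtain ⟨α, hα⟩ := h.Y_apply i2 p2 (by omega)
      have e3 := h.psiY p2 l2k p2 (by omega)
      have e4 : b.coord k (Y i2 (Y i2 (b 0))) = α * b.coord k (Y i2 (b 0)) + b.coord k (Y i2 (b i2)) := by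
        conv_lhs => rw [hα]
        simp
      rw [inv0 _ hM2 k hk] at e4
      linear_combination e1 - e2 + e4 - e3
    have e1 := (h.R12 hT p2 l2k).1
    have e := expand012 b h1 h2 (T (b 0)) (inv0 T hT)
    have e2 : ψ i2 k (T (b 0)) = 0 := by
      rw [e]; simp [q, hz k hk, h.psi0 i2 k p2 l2k]
    rw [e2, add_zero] at e1
    exact e1
  have ew : b i1 = w - c • b 0 := by rw [hw]; module
  have inv : ∀ x : E, (∀ k : Fin (m + 1), 2 < k.val → b.coord k x = 0) →
      ∃ p q r : K, x = p • b 0 + q • w + r • b i2 ∧ q = b.coord i1 x ∧ r = b.coord i2 x := by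
    intro x hx
    refine ⟨b.coord 0 x - c * b.coord i1 x, b.coord i1 x, b.coord i2 x, ?_, rfl, rfl⟩
    conv_lhs => rw [expand012 b h1 h2 x hx]
    rw [ew]; module
  have invw : ∀ T ∈ V, ∀ k : Fin (m + 1), 2 < k.val → b.coord k (T w) = 0 := by
    intro T hT k hk
    rw [hw, map_add, map_smul, map_add, map_smul, inv0 T hT k hk, inv1 T hT k hk]; simp
  -- linear independence
  have hli : LinearIndependent K ![b 0, w, b i2] := by
    rw [Fintype.linearIndependent_iff]
    intro v hv
    simp only [Fin.sum_univ_three, Matrix.cons_val_zero, Matrix.cons_val_one, Matrix.cons_val] at hv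
    have q2 := congrArg (b.coord i2) hv
    have q1 := congrArg (b.coord i1) hv
    have q0 := congrArg (b.coord 0) hv
    rw [hw] at q0 q1 q2
    simp only [map_add, map_smul, map_zero, gz_coord, smul_eq_mul, p1.ne, p2.ne, p1.ne', p2.ne',
      l12.ne, l12.ne', if_true, if_false] at q0 q1 q2
    have r2 : v 2 = 0 := by linear_combination q2
    have r1 : v 1 = 0 := by linear_combination q1
    have r0 : v 0 = 0 := by rw [r1] at q0; linear_combination q0
    intro i
    fin_cases i
    · exact r0
    · exact r1
    · exact r2
  have hNu : S i1 i2 (b 0) = 0 := h.S_zero p1 l12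
  have hNw : S i1 i2 w = b 0 := by
    rw [hw, map_add, map_smul, hNu, h.S_apply i1 i2 p1 l12, gz_coord, if_neg l12.ne, ← hsd, s1]; simp
  have hNz : S i1 i2 (b i2) = w := by
    rw [h.S_apply i1 i2 p1 l12, gz_coord, if_pos rfl, ← hc, hw]; simp
  obtain ⟨hh, g, r, eq1, -, -⟩ := inv _ (invw _ hM1)
  obtain ⟨hh', g', r', eq2, -, -⟩ := inv _ (invw _ hM2)
  obtain ⟨α1, hα1⟩ := h.Y_apply i1 p1 (by omega)
  obtain ⟨α2, hα2⟩ := h.Y_apply i2 p2 (by omega)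
  set A := Y i1 - hh • S i1 i2 with hA
  set B := Y i2 - hh' • S i1 i2 with hB
  have hAV : A ∈ V := V.sub_mem hM1 (V.smul_mem _ hN)
  have hBV : B ∈ V := V.sub_mem hM2 (V.smul_mem _ hN)
  obtain ⟨x0, x1, x2, eq3, -, -⟩ := inv _ (inv2 _ hAV)
  obtain ⟨z0, z1, z2, eq4, -, -⟩ := inv _ (inv2 _ hBV)
  have Au : A (b 0) = (α1 - c) • b 0 + w := by
    rw [hA, LinearMap.sub_apply, LinearMap.smul_apply, hNu, hα1, ew]; module
  have Aw : A w = g • w + r • b i2 := by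
    rw [hA, LinearMap.sub_apply, LinearMap.smul_apply, hNw, eq1]; module
  have Bu : B (b 0) = α2 • b 0 + b i2 := by
    rw [hB, LinearMap.sub_apply, LinearMap.smul_apply, hNu, hα2]; module
  have Bw : B w = g' • w + r' • b i2 := by
    rw [hB, LinearMap.sub_apply, LinearMap.smul_apply, hNw, eq2]; module
  refine gz_three hK (α1 - c) g r x0 x1 x2 α2 g' r' z0 z1 z2 ?_ ?_ ?_ ?_ ?_ ?_
  · apply gz_nil3 _ hli A (h.nil _ hAV)
    intro j
    fin_cases j <;> simp [Fin.sum_univ_three, Au, Aw, eq3]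
  · apply gz_nil3 _ hli (A + S i1 i2) (h.nil _ (V.add_mem hAV hN))
    intro j
    fin_cases j <;> simp [Fin.sum_univ_three, Au, Aw, eq3, hNu, hNw, hNz] <;> module
  · apply gz_nil3 _ hli B (h.nil _ hBV)
    intro j
    fin_cases j <;> simp [Fin.sum_univ_three, Bu, Bw, eq4]
  · apply gz_nil3 _ hli (B + S i1 i2) (h.nil _ (V.add_mem hBV hN))
    intro j
    fin_cases j <;> simp [Fin.sum_univ_three, Bu, Bw, eq4, hNu, hNw, hNz] <;> module
  · apply gz_nil3 _ hli (A + B) (h.nil _ (V.add_mem hAV hBV))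
    intro j
    fin_cases j <;> simp [Fin.sum_univ_three, Au, Aw, eq3, Bu, Bw, eq4] <;> module
  · apply gz_nil3 _ hli (A + B + S i1 i2) (h.nil _ (V.add_mem (V.add_mem hAV hBV) hN))
    intro j
    fin_cases j <;> simp [Fin.sum_univ_three, Au, Aw, eq3, Bu, Bw, eq4, hNu, hNw, hNz] <;> module

lemma case_two (h : GzSetup V m d b S ψ Y) (hd : d = 2) : False := by
  have hdm := h.dm
  subst hd
  obtain ⟨i1, h1⟩ : ∃ i : Fin (m + 1), i.val = 1 := ⟨⟨1, by omega⟩, rfl⟩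
  obtain ⟨i2, h2⟩ : ∃ i : Fin (m + 1), i.val = 2 := ⟨⟨2, by omega⟩, rfl⟩
  have p1 : 0 < i1 := fpos (by omega)
  have p2 : 0 < i2 := fpos (by omega)
  have l12 : i1 < i2 := by rw [Fin.lt_def]; omega
  have hM1 := h.Y_mem i1 p1 (by omega)
  have hM2 := h.Y_mem i2 p2 (by omega)
  set c := ψ i1 i2 (b i2) with hc
  have hw := w_ne b i1 p1 c
  have hmin := h.min _ hw
  have wL2 : ψ i1 i2 (b i1) = 0 → gzRk (b i1 + c • b 0) (b.coord i2) ∈ V := by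
    intro hs
    apply h.wL p1 l12
    intro k hk hkd
    have hk' : 0 < k.val := Fin.lt_def.1 hk
    obtain rfl | rfl : k = i1 ∨ k = i2 := by
      simp only [Fin.ext_iff]; omega
    · rw [hs, if_neg l12.ne]
    · rw [if_pos rfl]
  by_cases hz : ∀ j : Fin (m + 1), 2 < j.val → ψ i2 j (b i1) = 0
  · apply h.case_two_sub h1 h2 hz
    intro hs
    have hb := h.dw_bound hw (insert i2 (Finset.univ.filter (fun k : Fin (m + 1) => 3 ≤ k.val))) (by
      intro j hj
      rw [Finset.mem_insert] at hj
      rcases hj with rfl | hj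
      · exact wL2 hs
      · simp at hj
        exact h.wL' h1 h2 (by omega) (hz j (by omega)))
    rw [Finset.card_insert_of_notMem (by simp [h2])] at hb
    have := card_ge' (m := m) (c := 3)
    omega
  · push Not at hz
    obtain ⟨j, hj, hjz⟩ := hz
    obtain ⟨i3, h3⟩ : ∃ i : Fin (m + 1), i.val = 3 := ⟨⟨3, by omega⟩, rfl⟩
    have p3 : 0 < i3 := fpos (by omega)
    have l23 : i2 < i3 := by rw [Fin.lt_def]; omega
    have n23 : i2 ≠ i3 := l23.ne
    have hz4 : ∀ j : Fin (m + 1), 3 < j.val → ψ i2 j (b i1) = 0 := by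
      intro j hj
      have l3j : i3 < j := by rw [Fin.lt_def]; omega
      have e1 := h.R3b hM2 p1 (l12.trans l23) l3j
      have e2 := h.R3b hM2 p1 l12 (l23.trans l3j)
      rw [h.coordY p2 p2 (by omega), if_pos rfl] at e2
      rw [h.coordY p3 p2 (by omega), if_neg n23] at e1
      rw [h.RL1 hM2 (by omega)] at e1 e2
      linear_combination e1 - e2
    have hj3 : j = i3 := by
      by_contra hne
      exact hjz (hz4 j (by
        have : j.val ≠ i3.val := fun h => hne (Fin.ext h)
        omega))
    subst hj3
    rename' j => i3
    have hs : ψ i1 i2 (b i1) = 0 := by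
      obtain ⟨α, hα⟩ := h.Y_apply i1 p1 (by omega)
      have c2 := h.coordY p2 p1 (by omega)
      rw [if_neg l12.ne] at c2
      have c3 := h.RL1 hM1 hj
      have e0 : b.coord i2 (Y i1 (Y i1 (b 0))) = - ψ i1 i2 (b i1) := by
        have e1 := (h.R12 hM1 p1 l12).1
        rw [h.psiY p1 l12 p1 (by omega)] at e1
        have : b.coord i2 (Y i1 (Y i1 (b 0))) = α * b.coord i2 (Y i1 (b 0)) + b.coord i2 (Y i1 (b i1)) := by
          conv_lhs => rw [hα]
          simp
        rw [this, c2]; linear_combination e1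
      have e := expand012 b h1 h2 (Y i1 (Y i1 (b 0))) (fun k hk => h.RL2 hM1 hk)
      have e3 := h.RL hM1 hj 3
      have e4 : (Y i1 ^ 3) (b 0) = Y i1 (Y i1 (Y i1 (b 0))) := by simp [pow_succ]
      rw [e4, e, e0] at e3
      have f1 : b.coord i3 (Y i1 (b i1)) = 0 := by
        have e1 := (h.R12 hM1 p1 (l12.trans l23)).1
        rw [h.R3b hM1 p1 l12 l23, c2, c3] at e1
        simpa using e1
      have f2 : b.coord i3 (Y i1 (b i2)) = - ψ i2 i3 (b i1) := by
        have e1 := (h.R12 hM1 p2 l23).1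
        rw [h.psiY p2 l23 p1 (by omega)] at e1
        linear_combination e1
      simp only [map_add, map_smul, smul_eq_mul, f1, f2, c3] at e3
      have : ψ i1 i2 (b i1) * ψ i2 i3 (b i1) = 0 := by linear_combination e3
      exact (mul_eq_zero.1 this).resolve_right hjz
    have hb := h.dw_bound hw (insert i2 (Finset.univ.filter (fun k : Fin (m + 1) => 4 ≤ k.val))) (by
      intro j hj
      rw [Finset.mem_insert] at hj
      rcases hj with rfl | hj
      · exact wL2 hs
      · simp at hj
        exact h.wL' h1 h2 (by omega) (hz4 j (by omega)))
    rw [Finset.card_insert_of_notMem (by simp [h2])] at hb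
    have := card_ge' (m := m) (c := 4)
    apply h.finishZ h1 h2 h3 c hjz (by omega)
    intro Z hZ hZw
    have hZ1 : Z (b i1) = - c • Z (b 0) := by
      rw [map_add, map_smul] at hZw
      rw [neg_smul]; exact eq_neg_of_add_eq_zero_left hZw
    have e13 := (h.R12 hZ p1 (l12.trans l23)).1
    rw [h.R3b hZ p1 l12 l23, hZ1, map_smul, smul_eq_mul, ← hc] at e13
    have z2 : b.coord i2 (Z (b 0)) = 0 := by
      have : ψ i2 i3 (b i1) * b.coord i2 (Z (b 0)) = 0 := by linear_combination e13
      exact (mul_eq_zero.1 this).resolve_left hjz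
    intro k hk
    rcases Nat.lt_or_ge 2 k.val with hk3 | hk3
    · exact h.RL1 hZ hk3
    · obtain rfl : k = i2 := by
        simp only [Fin.ext_iff]; omega
      exact z2

theorem absurd (h : GzSetup V m d b S ψ Y) : False := by
  have := h.d1
  rcases (by omega : d = 1 ∨ d = 2 ∨ d = 3 ∨ 4 ≤ d) with hd | hd | hd | hd
  · exact h.case_one hd
  · exact h.case_two hd
  · exact h.case_three hd
  · exact h.case_big hd

end GzSetup


universe gu

/-- strictly upper triangular endomorphisms with respect to a basis -/
def gzNT {K E : Type*} [Field K] [AddCommGroup E] [Module K E] {n : ℕ}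
    (b : Module.Basis (Fin n) K E) : Submodule K (Module.End K E) where
  carrier := {M | ∀ i j, j ≤ i → b.coord i (M (b j)) = 0}
  add_mem' := by
    intro M N hM hN i j hij
    rw [LinearMap.add_apply, map_add, hM i j hij, hN i j hij, add_zero]
  zero_mem' := by intro i j _; simp
  smul_mem' := by
    intro c M hM i j hij
    rw [LinearMap.smul_apply, map_smul, hM i j hij, smul_zero]

lemma mem_gzNT {K E : Type*} [Field K] [AddCommGroup E] [Module K E] {n : ℕ}
    (b : Module.Basis (Fin n) K E) (M : Module.End K E) :
    M ∈ gzNT b ↔ ∀ i j, j ≤ i → b.coord i (M (b j)) = 0 := Iff.rfl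

lemma gzNT_nil {K E : Type*} [Field K] [AddCommGroup E] [Module K E] {n : ℕ}
    (b : Module.Basis (Fin n) K E) (M : Module.End K E) (hM : M ∈ gzNT b) : IsNilpotent M := by
  have h1 : ∀ i j, j ≤ i → LinearMap.toMatrix b b M i j = 0 := by
    intro i j hij
    rw [LinearMap.toMatrix_apply]
    exact hM i j hij
  have h2 : (LinearMap.toMatrix b b M).charpoly = Polynomial.X ^ n := by
    rw [Matrix.charpoly_of_upperTriangular _ (fun i j hij => h1 i j (le_of_lt hij))]
    simp [h1]
  have h3 := Matrix.aeval_self_charpoly (LinearMap.toMatrix b b M)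
  rw [h2] at h3
  simp only [map_pow, Polynomial.aeval_X] at h3
  refine ⟨n, ?_⟩
  apply (LinearMap.toMatrixAlgEquiv b).injective
  rw [map_pow, map_zero]
  exact h3

lemma gz_finrank_quot {K E : Type*} [Field K] [AddCommGroup E] [Module K E]
    [FiniteDimensional K E] (m : ℕ) (hE : Module.finrank K E = m + 1) (u : E) (hu : u ≠ 0) :
    Module.finrank K (E ⧸ (K ∙ u)) = m := by
  have := Submodule.finrank_quotient_add_finrank (K ∙ u)
  rw [finrank_span_singleton hu] at this
  omega

theorem gz_bound {K : Type*} [Field K] (n : ℕ) : ∀ (E : Type gu) [AddCommGroup E] [Module K E]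
    [FiniteDimensional K E] (_ : Module.finrank K E = n)
    (V : Submodule K (Module.End K E)) (_ : ∀ M ∈ V, IsNilpotent M),
    Module.finrank K V ≤ n.choose 2 := by
  induction n with
  | zero =>
    intro E _ _ _ hE V hV
    have h1 : Module.finrank K (Module.End K E) = 0 := by
      rw [Module.finrank_linearMap, hE]
    have := Submodule.finrank_le V
    exact this.trans (by rw [h1]; exact Nat.zero_le _)
  | succ m ih =>
    intro E _ _ _ hE V hV
    have : Nontrivial E := Module.nontrivial_of_finrank_pos (R := K) (by omega)
    obtain ⟨u, hu⟩ := exists_ne (0 : E)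
    have h1 := ih (E ⧸ (K ∙ u)) (gz_finrank_quot m hE u hu) (gzQ V u) (gzQ_nil V hV u)
    have h2 := gz_finrank_Q V u
    have h3 := gz_L_bound V hV u hu
    have h4 := gz_finrank_split V u
    have h5 : (m + 1).choose 2 = m + m.choose 2 := by
      rw [Nat.choose_succ_succ' m 1, Nat.choose_one_right]
    omega

lemma gz_parts {K : Type*} [Field K] (m : ℕ) (E : Type gu) [AddCommGroup E] [Module K E]
    [FiniteDimensional K E] (hE : Module.finrank K E = m + 1)
    (V : Submodule K (Module.End K E)) (hV : ∀ M ∈ V, IsNilpotent M)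
    (hd : Module.finrank K V = (m + 1).choose 2) (u : E) (hu : u ≠ 0) :
    Module.finrank K (gzQ V u) = m.choose 2 ∧
    Module.finrank K (gzL V u) + Module.finrank K (gzO V u) + 1 = Module.finrank K E := by
  have h1 := gz_bound m (E ⧸ (K ∙ u)) (gz_finrank_quot m hE u hu) (gzQ V u) (gzQ_nil V hV u)
  have h2 := gz_finrank_Q V u
  have h3 := gz_L_bound V hV u hu
  have h4 := gz_finrank_split V u
  have h5 : (m + 1).choose 2 = m + m.choose 2 := by
    rw [Nat.choose_succ_succ' m 1, Nat.choose_one_right]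
  omega

lemma gz_full {K : Type*} [Field K] (n : ℕ) (E : Type gu) [AddCommGroup E] [Module K E]
    [FiniteDimensional K E] (V : Submodule K (Module.End K E))
    (hd : Module.finrank K V = n.choose 2) (b : Module.Basis (Fin n) K E) (hb : V ≤ gzNT b) :
    V = gzNT b := by
  apply Submodule.eq_of_le_of_finrank_le hb
  rw [hd]
  exact gz_bound n E (by rw [Module.finrank_eq_card_basis b]; simp) _ (gzNT_nil b)

lemma gz_lift {K E : Type*} [Field K] [AddCommGroup E] [Module K E] [FiniteDimensional K E]
    (m : ℕ) (hE : Module.finrank K E = m + 1)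
    (u : E) (hu : u ≠ 0) (c : Module.Basis (Fin m) K (E ⧸ (K ∙ u))) :
    ∃ b : Module.Basis (Fin (m + 1)) K E, b 0 = u ∧ (∀ i : Fin m, (K ∙ u).mkQ (b i.succ) = c i) ∧
      ∀ (i : Fin m) x, b.coord i.succ x = c.coord i ((K ∙ u).mkQ x) := by
  choose g hg using fun i : Fin m => (K ∙ u).mkQ_surjective (c i)
  have hu0 : (K ∙ u).mkQ u = 0 := by simp [Submodule.mem_span_singleton_self]
  set v : Fin (m + 1) → E := Fin.cons u g with hv
  have hli : LinearIndependent K v := by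
    rw [Fintype.linearIndependent_iff]
    intro a ha
    rw [Fin.sum_univ_succ] at ha
    simp only [hv, Fin.cons_zero, Fin.cons_succ] at ha
    have h1 := congrArg (K ∙ u).mkQ ha
    rw [map_add, map_smul, hu0, map_sum, smul_zero, zero_add, map_zero] at h1
    simp only [map_smul, hg] at h1
    have h2 := Fintype.linearIndependent_iff.1 c.linearIndependent (fun i => a i.succ) h1
    have h3 : ∑ i : Fin m, a i.succ • g i = 0 :=
      Finset.sum_eq_zero (fun i _ => by rw [h2 i, zero_smul])
    rw [h3, add_zero] at ha
    intro i
    refine Fin.cases ?_ h2 i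
    exact (smul_eq_zero.1 ha).resolve_right hu
  let b := basisOfLinearIndependentOfCardEqFinrank hli (by rw [hE]; simp)
  have hb : ⇑b = v := coe_basisOfLinearIndependentOfCardEqFinrank hli _
  have hb0 : b 0 = u := by rw [hb, hv, Fin.cons_zero]
  have hbs : ∀ i : Fin m, (K ∙ u).mkQ (b i.succ) = c i := by
    intro i; rw [hb, hv, Fin.cons_succ, hg]
  refine ⟨b, hb0, hbs, ?_⟩
  intro i x
  have : b.coord i.succ = (c.coord i).comp (K ∙ u).mkQ := by
    apply b.ext
    intro k
    rw [LinearMap.comp_apply, gz_coord]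
    refine Fin.cases ?_ (fun k => ?_) k
    · rw [hb0, hu0, map_zero, if_neg (Fin.succ_ne_zero i).symm]
    · rw [hbs, Module.Basis.coord_apply, Module.Basis.repr_self, Finsupp.single_apply]
      simp
  rw [this]; rfl

/-- the subspace `W = K u + V u` is a coordinate subspace -/
lemma gz_W {K E : Type*} [Field K] [AddCommGroup E] [Module K E] [FiniteDimensional K E]
    (m d : ℕ) (b : Module.Basis (Fin (m + 1)) K E) (W : Submodule K E) (h0 : b 0 ∈ W)
    (hW : Module.finrank K W = d + 1)
    (hN : ∀ i j : Fin (m + 1), 0 < i → i < j → ∀ x ∈ W, b.coord j x • b i ∈ W) :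
    (∀ k : Fin (m + 1), k.val ≤ d → b k ∈ W) ∧
    (∀ k : Fin (m + 1), d < k.val → ∀ x ∈ W, b.coord k x = 0) := by
  classical
  obtain ⟨e, he, hmax⟩ : ∃ e : Fin (m + 1), (∃ x ∈ W, b.coord e x ≠ 0) ∧
      ∀ k : Fin (m + 1), e < k → ∀ x ∈ W, b.coord k x = 0 := by
    have hne : (Finset.univ.filter (fun e : Fin (m + 1) => ∃ x ∈ W, b.coord e x ≠ 0)).Nonempty :=
      ⟨0, by simp only [Finset.mem_filter, Finset.mem_univ, true_and]
             exact ⟨b 0, h0, by rw [gz_coord]; simp⟩⟩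
    refine ⟨Finset.max' _ hne, ?_, ?_⟩
    · exact (Finset.mem_filter.1 (Finset.max'_mem _ hne)).2
    · intro k hk x hx
      by_contra hcon
      have hk' : k ∈ Finset.univ.filter (fun e : Fin (m + 1) => ∃ x ∈ W, b.coord e x ≠ 0) := by
        simp only [Finset.mem_filter, Finset.mem_univ, true_and]
        exact ⟨x, hx, hcon⟩
      have := Finset.le_max' _ k hk'
      exact absurd hk (not_lt.2 this)
  obtain ⟨x, hx, hxe⟩ := he
  have h1 : ∀ k, k < e → b k ∈ W := by
    intro k hk
    rcases (Fin.zero_le k).eq_or_lt with hk0 | hk0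
    · rw [← hk0]; exact h0
    · exact (W.smul_mem_iff hxe).1 (hN k e hk0 hk x hx)
  have h2 : b e ∈ W := by
    have hs := b.sum_repr x
    have : b.coord e x • b e = x - ∑ k ∈ Finset.univ.erase e, b.repr x k • b k := by
      rw [eq_sub_iff_add_eq]
      conv_rhs => rw [← hs]
      exact Finset.add_sum_erase Finset.univ (fun k => b.repr x k • b k) (Finset.mem_univ e)
    apply (W.smul_mem_iff hxe).1
    rw [this]
    apply W.sub_mem hx
    apply W.sum_mem
    intro k hk
    rcases lt_trichotomy k e with hke | hke | hke
    · exact W.smul_mem _ (h1 k hke)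
    · exact absurd hke (Finset.ne_of_mem_erase hk)
    · have : b.repr x k = 0 := hmax k hke x hx
      rw [this, zero_smul]; exact W.zero_mem
  have h3 : ∀ k, k ≤ e → b k ∈ W := by
    intro k hk
    rcases hk.eq_or_lt with hk | hk
    · rw [hk]; exact h2
    · exact h1 k hk
  have hWs : W = Submodule.span K (Set.range (fun k : Finset.Iic e => b k.1)) := by
    apply le_antisymm
    · intro y hy
      rw [← b.sum_repr y]
      apply Submodule.sum_mem
      intro k _
      by_cases hk : k ≤ e
      · exact Submodule.smul_mem _ _ (Submodule.subset_span ⟨⟨k, Finset.mem_Iic.2 hk⟩, rfl⟩)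
      · have : b.repr y k = 0 := hmax k (not_le.1 hk) y hy
        rw [this, zero_smul]; exact Submodule.zero_mem _
    · rw [Submodule.span_le]
      rintro _ ⟨k, rfl⟩
      exact h3 k.1 (Finset.mem_Iic.1 k.2)
  have hli : LinearIndependent K (fun k : Finset.Iic e => b k.1) :=
    b.linearIndependent.comp _ Subtype.val_injective
  have h4 := finrank_span_eq_card hli
  rw [← hWs, hW, Fintype.card_coe, Fin.card_Iic] at h4
  refine ⟨fun k hk => h3 k (by rw [Fin.le_def]; omega), fun k hk => hmax k (by rw [Fin.lt_def]; omega)⟩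


universe gv

lemma gz_setup_false {K : Type*} [Field K] (m : ℕ) (E : Type gv) [AddCommGroup E] [Module K E]
    [FiniteDimensional K E] (hE : Module.finrank K E = m + 1)
    (V : Submodule K (Module.End K E)) (hV : ∀ M ∈ V, IsNilpotent M)
    (hd : Module.finrank K V = (m + 1).choose 2) (u : E) (hu : u ≠ 0)
    (hmin : ∀ w : E, w ≠ 0 → Module.finrank K (gzO V u) ≤ Module.finrank K (gzO V w))
    (hpos : 1 ≤ Module.finrank K (gzO V u))
    (c : Module.Basis (Fin m) K (E ⧸ (K ∙ u))) (hc : gzQ V u = gzNT c) : False := by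
  obtain ⟨-, hL⟩ := gz_parts m E hE V hV hd u hu
  obtain ⟨b, hb0, hbs, hbc⟩ := gz_lift m hE u hu c
  set d := Module.finrank K (gzO V u) with hdd
  set W : Submodule K E := K ∙ u ⊔ gzO V u with hW
  have hWd : Module.finrank K W = d + 1 := gz_disj V hV u hu
  have huW : u ∈ W := Submodule.mem_sup_left (Submodule.mem_span_singleton_self u)
  have hMW : ∀ M ∈ V, M u ∈ W := fun M hM =>
    Submodule.mem_sup_right ((mem_gzO _ _ _).2 ⟨M, hM, rfl⟩)
  -- functionals vanishing on `W`
  have hfW : ∀ f : Module.Dual K E, (∀ x ∈ W, f x = 0) → gzRk u f ∈ V := by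
    intro f hf
    exact gz_L_eq V hV u hu hL f (hf u huW) (fun M hM => hf _ (hMW M hM))
  -- lifts of the elementary operators
  have hS : ∀ i j : Fin (m + 1), 0 < i → i < j → ∃ N ∈ V, N u = 0 ∧
      ∀ x, N x = b.coord j x • b i + b.coord 0 (N x) • b 0 := by
    intro i j hi hij
    obtain ⟨i', rfl⟩ := Fin.exists_succ_eq.2 hi.ne'
    obtain ⟨j', rfl⟩ := Fin.exists_succ_eq.2 (hi.trans hij).ne'
    have hij' : i' < j' := Fin.succ_lt_succ_iff.1 hij
    have hT : gzRk (c i') (c.coord j') ∈ gzQ V u := by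
      rw [hc, mem_gzNT]
      intro p q hqp
      rw [gzRk_apply, map_smul, Module.Basis.coord_apply, Module.Basis.coord_apply,
        Module.Basis.repr_self, Module.Basis.repr_self, Finsupp.single_apply, Finsupp.single_apply]
      by_cases h1 : q = j'
      · have : i' ≠ p := by rintro rfl; subst h1; exact absurd hij' (not_lt.2 hqp)
        rw [if_neg this, smul_zero]
      · rw [if_neg h1, zero_smul]
    obtain ⟨N, hNV, hNu, hN⟩ := (mem_gzQ _ _ _).1 hT
    refine ⟨N, hNV, hNu, ?_⟩
    intro x
    have h1 : N x - b.coord j'.succ x • b i'.succ ∈ K ∙ u := by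
      rw [← Submodule.ker_mkQ (K ∙ u), LinearMap.mem_ker, map_sub, ← hN, map_smul, hbs, hbc,
        gzRk_apply, sub_self]
    obtain ⟨a, ha⟩ := Submodule.mem_span_singleton.1 h1
    have h2 := congrArg (b.coord 0) ha
    rw [← hb0] at h2 ha
    rw [map_sub, map_smul, map_smul, gz_coord, gz_coord, if_pos rfl,
      if_neg (Fin.succ_ne_zero i')] at h2
    have h3 : b.coord 0 (N x) = a := by simpa using h2.symm
    rw [h3, ha]; abel
  -- invariance
  have hinv : ∀ N ∈ V, N u = 0 → ∀ x ∈ W, N x ∈ W := by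
    intro N hN hNu x hx
    obtain ⟨y, hy, z, hz, rfl⟩ := Submodule.mem_sup.1 hx
    obtain ⟨a, rfl⟩ := Submodule.mem_span_singleton.1 hy
    obtain ⟨M, hM, rfl⟩ := (mem_gzO _ _ _).1 hz
    rw [map_add, map_smul, hNu, smul_zero, zero_add]
    by_contra hcon
    obtain ⟨f, hf1, hf2⟩ := Submodule.exists_le_ker_of_notMem hcon
    have hf3 : ∀ x ∈ W, f x = 0 := fun x hx => LinearMap.mem_ker.1 (hf2 hx)
    have hfV := hfW f hf3
    have key : ∀ M ∈ V, f (M (M u)) = 0 := by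
      intro M hM
      have := gz_R1 M (gzRk u f) f u (fun _ => rfl) (hV M hM) (hV _ (V.add_mem hM hfV)) 2
      simpa [pow_two] using this
    have e1 := key M hM
    have e2 := key (M + N) (V.add_mem hM hN)
    simp only [LinearMap.add_apply, hNu, add_zero, map_add, e1, zero_add] at e2
    exact hf1 e2
  obtain ⟨hW1, hW2⟩ := gz_W m d b W (by rw [hb0]; exact huW) hWd (by
    intro i j hi hij x hx
    obtain ⟨N, hNV, hNu, hN⟩ := hS i j hi hij
    have h1 := hinv N hNV hNu x hx
    have h2 : b.coord j x • b i = N x - b.coord 0 (N x) • u := by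
      rw [eq_sub_iff_add_eq, ← hb0, ← hN]
    rw [h2]
    exact W.sub_mem h1 (W.smul_mem _ huW))
  have hY : ∀ k : Fin (m + 1), ∃ Y : Module.End K E, 0 < k → k.val ≤ d →
      Y ∈ V ∧ ∃ α : K, Y (b 0) = α • b 0 + b k := by
    intro k
    by_cases hk : k.val ≤ d
    · obtain ⟨y, hy, z, hz, hyz⟩ := Submodule.mem_sup.1 (hW1 k hk)
      obtain ⟨a, rfl⟩ := Submodule.mem_span_singleton.1 hy
      obtain ⟨M, hM, rfl⟩ := (mem_gzO _ _ _).1 hz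
      refine ⟨M, fun _ _ => ⟨hM, -a, ?_⟩⟩
      rw [← hyz, hb0]; module
    · exact ⟨0, fun _ h => absurd h hk⟩
  choose Y hY using hY
  have hS2 : ∀ i j : Fin (m + 1), ∃ ψ : Module.Dual K E, 0 < i → i < j →
      gzRk (b i) (b.coord j) + gzRk (b 0) ψ ∈ V ∧ ψ (b 0) = 0 ∧
      ∀ k : Fin (m + 1), d < k.val → ψ (b k) = 0 := by
    intro i j
    by_cases hij : 0 < i ∧ i < j
    · obtain ⟨N, hNV, hNu, hN⟩ := hS i j hij.1 hij.2
      let ψ0 : Module.Dual K E := (b.coord 0).comp N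
      let ψ : Module.Dual K E := b.constr K (fun k => if d < k.val then 0 else ψ0 (b k))
      have hψ : ∀ k, ψ (b k) = if d < k.val then 0 else ψ0 (b k) := fun k => b.constr_basis K _ k
      refine ⟨ψ, fun _ _ => ⟨?_, ?_, ?_⟩⟩
      · have h1 : gzRk u (ψ0 - ψ) ∈ V := by
          apply hfW
          intro x hx
          rw [← b.sum_repr x, map_sum]
          apply Finset.sum_eq_zero
          intro k _
          rw [map_smul, LinearMap.sub_apply, hψ]
          split_ifs with hk
          · have : b.repr x k = 0 := hW2 k hk x hx
            rw [this, zero_smul]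
          · rw [sub_self, smul_zero]
        have h2 : gzRk (b i) (b.coord j) + gzRk (b 0) ψ = N - gzRk u (ψ0 - ψ) := by
          apply LinearMap.ext
          intro x
          rw [LinearMap.add_apply, LinearMap.sub_apply, gzRk_apply, gzRk_apply, gzRk_apply,
            LinearMap.sub_apply, hN x, ← hb0]
          have : ψ0 x = b.coord 0 (N x) := rfl
          rw [this]; module
        rw [h2]
        exact V.sub_mem hNV h1
      · rw [hψ, if_neg (by simp)]
        change b.coord 0 (N (b 0)) = 0
        rw [hb0, hNu, map_zero]
      · intro k hk
        rw [hψ, if_pos hk]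
    · exact ⟨0, fun h1 h2 => absurd ⟨h1, h2⟩ hij⟩
  choose ψ hψ using hS2
  have hset : GzSetup V m d b (fun i j => gzRk (b i) (b.coord j) + gzRk (b 0) (ψ i j)) ψ Y :=
    { nil := hV
      S_mem := fun i j hi hij => (hψ i j hi hij).1
      S_apply := fun i j hi hij x => rfl
      psi0 := fun i j hi hij => (hψ i j hi hij).2.1
      psid := fun i j hi hij => (hψ i j hi hij).2.2
      L := fun k hk => by rw [hb0]; exact hfW _ (hW2 k hk)
      Y_mem := fun k hk hkd => (hY k hk hkd).1
      Y_apply := fun k hk hkd => (hY k hk hkd).2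
      dm := by omega
      d1 := hpos
      min := hmin
      du := by rw [hb0] }
  exact hset.absurd

theorem gz_flag {K : Type*} [Field K] (n : ℕ) : ∀ (E : Type gv) [AddCommGroup E] [Module K E]
    [FiniteDimensional K E] (_ : Module.finrank K E = n)
    (V : Submodule K (Module.End K E)) (_ : ∀ M ∈ V, IsNilpotent M)
    (_ : Module.finrank K V = n.choose 2),
    ∃ b : Module.Basis (Fin n) K E, V = gzNT b := by
  induction n with
  | zero =>
    intro E _ _ _ hE V hV hd
    let b := Module.finBasisOfFinrankEq K E hE
    exact ⟨b, gz_full 0 E V hd b (fun M _ i => i.elim0)⟩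
  | succ m ih =>
    intro E _ _ _ hE V hV hd
    have : Nontrivial E := Module.nontrivial_of_finrank_pos (R := K) (by omega)
    obtain ⟨u, hu, hmin⟩ : ∃ u : E, u ≠ 0 ∧
        ∀ w : E, w ≠ 0 → Module.finrank K (gzO V u) ≤ Module.finrank K (gzO V w) := by
      classical
      have hex : ∃ k, ∃ u : E, u ≠ 0 ∧ Module.finrank K (gzO V u) = k := by
        obtain ⟨u, hu⟩ := exists_ne (0 : E)
        exact ⟨_, u, hu, rfl⟩
      obtain ⟨u, hu, hk⟩ := Nat.find_spec hex
      refine ⟨u, hu, fun w hw => ?_⟩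
      rw [hk]
      exact Nat.find_min' hex ⟨w, hw, rfl⟩
    obtain ⟨hQ, -⟩ := gz_parts m E hE V hV hd u hu
    obtain ⟨c, hc⟩ := ih (E ⧸ (K ∙ u)) (gz_finrank_quot m hE u hu) (gzQ V u) (gzQ_nil V hV u) hQ
    by_cases hpos : 1 ≤ Module.finrank K (gzO V u)
    · exact (gz_setup_false m E hE V hV hd u hu hmin hpos c hc).elim
    · obtain ⟨b, hb0, hbs, hbc⟩ := gz_lift m hE u hu c
      have hz : gzO V u = ⊥ := Submodule.finrank_eq_zero.1 (by omega)
      have hVu : ∀ M ∈ V, M u = 0 := by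
        intro M hM
        have : M u ∈ gzO V u := (mem_gzO _ _ _).2 ⟨M, hM, rfl⟩
        rw [hz] at this
        exact (Submodule.mem_bot K).1 this
      refine ⟨b, gz_full _ E V hd b ?_⟩
      intro M hM
      rw [mem_gzNT]
      intro i j hij
      have hT : gzPhi V u ⟨M, (mem_gzS _ _ _).2 ⟨hM, hVu M hM⟩⟩ ∈ gzNT c := by
        rw [← hc]; exact ⟨_, rfl⟩
      rw [mem_gzNT] at hT
      refine Fin.cases ?_ (fun j => ?_) j hij
      · intro _; rw [hb0, hVu M hM, map_zero]
      · intro hij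
        have hi0 : i ≠ 0 := (lt_of_lt_of_le (Fin.succ_pos j) hij).ne'
        obtain ⟨i, rfl⟩ := Fin.exists_succ_eq.2 hi0
        have := hT i j (Fin.succ_le_succ_iff.1 hij)
        rw [← hbs] at this
        rw [hbc]
        exact this


theorem stmt_3 (K : Type*) [Field K] (n : ℕ) (hn : 0 < n)
    (V : Submodule K (Matrix (Fin n) (Fin n) K))
    (hV : ∀ M ∈ V, IsNilpotent M)
    (hdim : Module.finrank K V = n.choose 2) :
    ∃ P : (Matrix (Fin n) (Fin n) K)ˣ,
      ∀ M : Matrix (Fin n) (Fin n) K,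
        M ∈ V ↔ ∀ i j : Fin n, j ≤ i →
          ((P : Matrix (Fin n) (Fin n) K) * M * ((P⁻¹ : (Matrix (Fin n) (Fin n) K)ˣ) :
            Matrix (Fin n) (Fin n) K)) i j = 0 := by
  let φ : Matrix (Fin n) (Fin n) K ≃ₗ[K] Module.End K (Fin n → K) := Matrix.toLin'
  obtain ⟨b, hb⟩ := gz_flag n (Fin n → K) (by simp) (V.map φ.toLinearMap) (by
      rintro _ ⟨M, hM, rfl⟩
      exact (hV M hM).map (Matrix.toLinAlgEquiv' (R := K) (n := Fin n))) (by
      rw [← hdim]; exact LinearEquiv.finrank_map_eq φ V)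
  let e := Pi.basisFun K (Fin n)
  refine ⟨⟨b.toMatrix e, e.toMatrix b, b.toMatrix_mul_toMatrix_flip e,
    e.toMatrix_mul_toMatrix_flip b⟩, ?_⟩
  intro M
  have h1 : M ∈ V ↔ φ M ∈ V.map φ.toLinearMap := by
    constructor
    · intro h; exact ⟨M, h, rfl⟩
    · rintro ⟨M', h, h'⟩
      have : M' = M := φ.injective h'
      rw [← this]; exact h
  rw [h1, hb, mem_gzNT]
  have h2 : b.toMatrix e * M * e.toMatrix b = LinearMap.toMatrix b b (φ M) := by
    rw [← basis_toMatrix_mul_linearMap_toMatrix_mul_basis_toMatrix b e b e]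
    congr 2
    change M = LinearMap.toMatrix' (Matrix.toLin' M)
    simp
  have h3 : ∀ i j, (b.toMatrix e * M * e.toMatrix b) i j = b.coord i (φ M (b j)) := by
    intro i j
    rw [h2, LinearMap.toMatrix_apply]; rfl
  constructor
  · intro h i j hij
    exact (h3 i j).trans (h i j hij)
  · intro h i j hij
    exact (h3 i j).symm.trans (h i j hij)
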